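/- Uniqueness of the Nahm pole solution on the half-space. Let t₁, t₂, t₃ be skew-Hermitian matrices satisfying the su(2) commutation relations, let Ω = {x ∈ ℝ⁴ : x₄ > 0}, and let A, φ : Ω → (Fin 4 → Matrix (Fin n) (Fin n) ℂ) be smooth, skew-Hermitian-valued, and satisfy the KW equations on Ω. Suppose there exist C > 0 and δ ∈ (0,1) such that for every x ∈ Ω, writing y = x₄ and r = ‖x‖ and using the Frobenius norm: (a) ‖φ_a(x) − y⁻¹ t_a‖ ≤ C·min(y^δ, r^{−1−δ}) for a = 1,2,3; (b) ‖φ₄(x)‖ ≤ C·y^{1+δ}·(1+r)^{−3−2δ}; (c) ‖F_{ab}(x)‖ ≤ C·min(y^{1+δ}, r^{−2−δ}) for a,b ∈ {1,2,3}; (d) ‖D_aφ_b(x)‖ ≤ C·min(y^{δ}, r^{−2−δ}) for a,b ∈ {1,2,3}; (e) ‖D_aφ₄(x)‖ ≤ C·min(y^{1+δ}, r^{−2−δ}) for a = 1,2,3 and ‖D₄φ₄(x)‖ ≤ C·min(y^{δ}, r^{−2−δ}); (f) ‖D₄φ_a(x) + y⁻² t_a‖ ≤ C·min(1, r^{−2−δ})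 for a = 1,2,3. Then on all of Ω: F_{ij} = 0 for all i,j; φ₄ = 0; D_iφ₄ = 0 for all i; [φ₄, φ_a] = 0 and D_aφ_b = 0 for all a,b ∈ {1,2,3}; and D₄φ_a + (1/2) Σ_{b,c} ε_{abc} [φ_b, φ_c] = 0 for a = 1,2,3. (Thus the solution is flat, the fields φ_a are independent of x₁,x₂,x₃ up to gauge, and they solve Nahm's equations in y; i.e., the solution is the Nahm pole solution up to gauge.) -/

import Mathlib

open Matrix

attribute [local instance] Matrix.normedAddCommGroup Matrix.normedSpace

/-- The Levi-Civita symbol on three indices, with `ε₀₁₂ = 1`. -/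
noncomputable def eps3 (a b c : Fin 3) : ℂ :=
  ((((c.val : ℤ) - (b.val : ℤ)) * ((c.val : ℤ) - (a.val : ℤ)) *
      ((b.val : ℤ) - (a.val : ℤ)) : ℤ) : ℂ) / 2

/-- The Levi-Civita symbol on four indices, with `ε₀₁₂₃ = 1`. -/
noncomputable def eps4 (i j k l : Fin 4) : ℂ :=
  ((((l.val : ℤ) - (k.val : ℤ)) * ((l.val : ℤ) - (j.val : ℤ)) * ((l.val : ℤ) - (i.val : ℤ)) *
      ((k.val : ℤ) - (j.val : ℤ)) * ((k.val : ℤ) - (i.val : ℤ)) *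
      ((j.val : ℤ) - (i.val : ℤ)) : ℤ) : ℂ) / 12

/-- Partial derivative in the `i`-th coordinate direction of a matrix-valued map on `ℝ⁴`. -/
noncomputable def pd4 {n : ℕ} (i : Fin 4) (f : (Fin 4 → ℝ) → Matrix (Fin n) (Fin n) ℂ)
    (x : Fin 4 → ℝ) : Matrix (Fin n) (Fin n) ℂ :=
  deriv (fun t => f (Function.update x i t)) (x i)

/-- The curvature `F_{ij} = ∂_i A_j − ∂_j A_i + [A_i, A_j]`. -/
noncomputable def curv {n : ℕ} (A : (Fin 4 → ℝ) → Fin 4 → Matrix (Fin n) (Fin n) ℂ)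
    (i j : Fin 4) (x : Fin 4 → ℝ) : Matrix (Fin n) (Fin n) ℂ :=
  pd4 i (fun x => A x j) x - pd4 j (fun x => A x i) x + (A x i * A x j - A x j * A x i)

/-- The covariant derivative `D_i φ_j = ∂_i φ_j + [A_i, φ_j]`. -/
noncomputable def covD {n : ℕ} (A φ : (Fin 4 → ℝ) → Fin 4 → Matrix (Fin n) (Fin n) ℂ)
    (i j : Fin 4) (x : Fin 4 → ℝ) : Matrix (Fin n) (Fin n) ℂ :=
  pd4 i (fun x => φ x j) x + (A x i * φ x j - φ x j * A x i)

/-- The Frobenius norm `‖X‖ = √(tr(XᴴX))` of a complex matrix. -/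
noncomputable def frob {n : ℕ} (X : Matrix (Fin n) (Fin n) ℂ) : ℝ :=
  Real.sqrt ((Matrix.trace (Xᴴ * X)).re)

/-- The Euclidean norm on `ℝ⁴`. -/
noncomputable def nrm (x : Fin 4 → ℝ) : ℝ :=
  Real.sqrt (∑ i, x i ^ 2)

/-- The embedding `{1,2,3} ⊂ {1,2,3,4}` of the boundary directions. -/
abbrev sp : Fin 3 → Fin 4 := Fin.castSucc

/-!
On solutions of the KW equations, half the sum of the squared norms of the terms in Nahm's
equations, of the tangential and normal curvature, and of the covariant derivatives of the
transverse fields equals minus the divergence of a current `J` which is quadratic in the fields.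
The boundary and decay conditions make the flux of `J` through the faces of boxes exhausting the
half-space tend to zero. Hence the nonnegative density vanishes identically, which is every claimed
equation except `φ₄ = 0`. Finally `φ₄` is covariantly constant in the normal direction, so its norm
is constant along normal lines, and it tends to zero at the boundary.
-/

attribute [local instance] LieRing.ofAssociativeRing

section Flux

open Set Filter Topology MeasureTheory

theorem setIntegral_Icc_comp_apply {ι : Type*} [Fintype ι] [DecidableEq ι] {a b : ι → ℝ}
    (hab : a ≤ b) (j : ι) (f : ℝ → ℝ) :
    ∫ z in Icc a b, f (z j) =
      (∏ k ∈ Finset.univ.erase j, (b k - a k)) * ∫ y in Icc (a j) (b j), f y := by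
  have hprod := integral_fintype_prod_eq_prod (𝕜 := ℝ) (E := fun _ : ι => ℝ)
    (Function.update (fun _ _ => 1) j f) (μ := fun k => volume.restrict (Icc (a k) (b k)))
  rw [← Measure.restrict_pi_pi, Set.pi_univ_Icc, ← volume_pi,
    ← Finset.prod_erase_mul _ _ (Finset.mem_univ j)] at hprod
  have hrest : ∀ k ∈ Finset.univ.erase j,
      ∫ y in Icc (a k) (b k), Function.update (fun _ _ => (1 : ℝ)) j f k y = b k - a k := by
    intro k hk
    simp [Function.update_of_ne (Finset.ne_of_mem_erase hk), hab k]
  rw [Finset.prod_congr rfl hrest, Function.update_self] at hprod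
  rw [← hprod]
  congr 1 with z
  rw [← Finset.prod_erase_mul _ _ (Finset.mem_univ j), Function.update_self, Finset.prod_eq_one,
    one_mul]
  intro k hk
  rw [Function.update_of_ne (Finset.ne_of_mem_erase hk)]

theorem setIntegral_Icc_rpow_sub_one_le {ε L s : ℝ} (hε : 0 < ε) (hεL : ε ≤ L) (hs : 0 < s) :
    ∫ y in Icc ε L, y ^ (s - 1) ≤ L ^ s / s := by
  rw [integral_Icc_eq_integral_Ioc, ← intervalIntegral.integral_of_le hεL,
    integral_rpow (Or.inl (by linarith)), sub_add_cancel]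
  gcongr
  linarith [Real.rpow_nonneg hε.le s]

/-- The open half-space `{y > 0}` of `ℝ^(d+1)`, where `y` is the last coordinate. -/
def halfSpace (d : ℕ) : Set (Fin (d + 1) → ℝ) :=
  {x | 0 < x (Fin.last d)}

theorem isOpen_halfSpace (d : ℕ) : IsOpen (halfSpace d) :=
  isOpen_lt continuous_const (continuous_apply _)

/-- The lower corner of the box `[-L, L]^d × [ε, L]`. -/
def boxLower (d : ℕ) (ε L : ℝ) : Fin (d + 1) → ℝ :=
  Fin.snoc (α := fun _ => ℝ) (fun _ => -L) ε

/-- The upper corner of the box `[-L, L]^d × [ε, L]`. -/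
def boxUpper (d : ℕ) (L : ℝ) : Fin (d + 1) → ℝ :=
  fun _ => L

/-- The decay of a current `J` which kills its flux through the boundary of the boxes
`[-L, L]^d × [ε, L]`: the exponents `s`, `p` control the lateral faces, `δ` the bottom face and `q`
the top face. -/
structure HasFluxDecay {d : ℕ} (J : Fin (d + 1) → (Fin (d + 1) → ℝ) → ℝ) (K s p δ q : ℝ) :
    Prop where
  lateral : ∀ x ∈ halfSpace d, ∀ a : Fin d, x a.castSucc ≠ 0 →
    |J a.castSucc x| ≤ K * |x a.castSucc| ^ (-p) * x (Fin.last d) ^ (s - 1)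
  bottom : ∀ x ∈ halfSpace d, |J (Fin.last d) x| ≤ K * x (Fin.last d) ^ δ
  top : ∀ x ∈ halfSpace d, |J (Fin.last d) x| ≤ K * x (Fin.last d) ^ (-q)

variable {d : ℕ} {ε L : ℝ}

@[simp]
theorem boxLower_castSucc (a : Fin d) : boxLower d ε L a.castSucc = -L := by
  simp [boxLower]

@[simp]
theorem boxLower_last : boxLower d ε L (Fin.last d) = ε := by
  simp [boxLower]

theorem boxLower_le_boxUpper (hε : 0 < ε) (hεL : ε ≤ L) : boxLower d ε L ≤ boxUpper d L := by
  refine Fin.lastCases (by simpa [boxUpper] using hεL) fun a => ?_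
  rw [boxLower_castSucc, boxUpper]
  linarith

theorem Icc_boxLower_boxUpper_subset_halfSpace (hε : 0 < ε) :
    Icc (boxLower d ε L) (boxUpper d L) ⊆ halfSpace d := fun _ hx =>
  hε.trans_le (boxLower_last.symm.trans_le (hx.1 (Fin.last d)))

theorem Icc_boxLower_boxUpper_mono {ε' L' : ℝ} (hε : ε' ≤ ε) (hL : L ≤ L') :
    Icc (boxLower d ε L) (boxUpper d L) ⊆ Icc (boxLower d ε' L') (boxUpper d L') := by
  refine Icc_subset_Icc (Fin.lastCases (by simpa using hε) fun a => ?_) fun _ => hL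
  simpa using hL

theorem abs_setIntegral_lateral_face_le {u : (Fin (d + 1) → ℝ) → ℝ} {c M s : ℝ} (a : Fin d)
    (hε : 0 < ε) (hεL : ε ≤ L) (hs : 0 < s) (hM : 0 ≤ M)
    (hu : ∀ x ∈ halfSpace d, x a.castSucc = c → |u x| ≤ M * x (Fin.last d) ^ (s - 1)) :
    |∫ z in Icc (boxLower d ε L ∘ a.castSucc.succAbove) (boxUpper d L ∘ a.castSucc.succAbove),
      u (a.castSucc.insertNth c z)| ≤ M * ((2 * L) ^ (d - 1) * (L ^ s / s)) := by
  obtain ⟨j, hj⟩ := Fin.exists_succAbove_eq (Fin.castSucc_ne_last a).symm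
  set lo := boxLower d ε L ∘ a.castSucc.succAbove
  set hi := boxUpper d L ∘ a.castSucc.succAbove
  have hle : lo ≤ hi := fun k => boxLower_le_boxUpper hε hεL _
  have hloj : lo j = ε := by simp [lo, hj]
  have hlok : ∀ k ∈ Finset.univ.erase j, hi k - lo k = 2 * L := by
    intro k hk
    have hne : a.castSucc.succAbove k ≠ Fin.last d :=
      hj ▸ (Fin.succAbove_right_injective.ne (Finset.ne_of_mem_erase hk))
    obtain ⟨k', hk'⟩ := Fin.exists_castSucc_eq.2 hne
    simp only [hi, lo, boxUpper, Function.comp_apply, ← hk', boxLower_castSucc]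
    ring
  have hpos : ∀ z ∈ Icc lo hi, 0 < z j := fun z hz => hε.trans_le (hloj ▸ hz.1 j)
  have hlast : ∀ z : Fin d → ℝ, (a.castSucc.insertNth c z : Fin (d + 1) → ℝ) (Fin.last d) = z j :=
    fun z => by rw [← hj, Fin.insertNth_apply_succAbove]
  have hint : IntegrableOn (fun z : Fin d → ℝ => M * z j ^ (s - 1)) (Icc lo hi) :=
    ContinuousOn.integrableOn_compact isCompact_Icc <| continuousOn_const.mul <|
      ContinuousOn.rpow_const (by fun_prop) fun z hz => Or.inl (hpos z hz).ne'
  have hbound : ∀ z ∈ Icc lo hi, ‖u (a.castSucc.insertNth c z)‖ ≤ M * z j ^ (s - 1) :=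
    fun z hz => hlast z ▸ hu _ ((hpos z hz).trans_eq (hlast z).symm) (by simp)
  calc _ ≤ ∫ z in Icc lo hi, M * z j ^ (s - 1) :=
        norm_integral_le_of_norm_le hint
          ((ae_restrict_iff' measurableSet_Icc).2 (Eventually.of_forall hbound))
    _ = M * ((2 * L) ^ (d - 1) * ∫ y in Icc ε L, y ^ (s - 1)) := by
        rw [integral_const_mul, setIntegral_Icc_comp_apply hle j fun y => y ^ (s - 1), hloj,
          Finset.prod_congr rfl hlok]
        simp [hi, boxUpper]
    _ ≤ _ := by
        have := hε.trans_le hεL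
        gcongr
        exact setIntegral_Icc_rpow_sub_one_le hε hεL hs

theorem abs_setIntegral_horizontal_face_le {u : (Fin (d + 1) → ℝ) → ℝ} {c M : ℝ} (hL : 0 ≤ L)
    (hu : ∀ x : Fin (d + 1) → ℝ, x (Fin.last d) = c → |u x| ≤ M) :
    |∫ z in Icc (boxLower d ε L ∘ (Fin.last d).succAbove) (boxUpper d L ∘ (Fin.last d).succAbove),
      u ((Fin.last d).insertNth c z)| ≤ M * (2 * L) ^ d := by
  have hle : boxLower d ε L ∘ (Fin.last d).succAbove ≤ boxUpper d L ∘ (Fin.last d).succAbove := by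
    intro k
    simpa [boxUpper] using hL
  refine (norm_setIntegral_le_of_norm_le_const (f := fun z => u ((Fin.last d).insertNth c z))
    isCompact_Icc.measure_lt_top fun z _ => hu _ (Fin.insertNth_apply_same _ _ _)).trans_eq ?_
  rw [measureReal_def, Real.volume_Icc_pi_toReal hle]
  simp [boxUpper, two_mul]

variable {J : Fin (d + 1) → (Fin (d + 1) → ℝ) → ℝ} {e : (Fin (d + 1) → ℝ) → ℝ} {K s p δ q : ℝ}

theorem setIntegral_box_eq_neg_flux (hε : 0 < ε) (hεL : ε ≤ L)
    (hJ : ∀ i, DifferentiableOn ℝ (J i) (halfSpace d)) (he : ContinuousOn e (halfSpace d))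
    (hdiv : ∀ x ∈ halfSpace d, ∑ i, fderiv ℝ (J i) x (Pi.single i 1) = -e x) :
    ∫ x in Icc (boxLower d ε L) (boxUpper d L), e x = ∑ i : Fin (d + 1),
      ((∫ z in Icc (boxLower d ε L ∘ i.succAbove) (boxUpper d L ∘ i.succAbove),
          J i (i.insertNth (boxLower d ε L i) z)) -
        ∫ z in Icc (boxLower d ε L ∘ i.succAbove) (boxUpper d L ∘ i.succAbove),
          J i (i.insertNth L z)) := by
  have hsub := Icc_boxLower_boxUpper_subset_halfSpace (d := d) (L := L) hε
  have hint : IntegrableOn e (Icc (boxLower d ε L) (boxUpper d L)) :=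
    (he.mono hsub).integrableOn_compact isCompact_Icc
  have hstokes := integral_divergence_of_hasFDerivAt_off_countable' (boxLower d ε L) (boxUpper d L)
    (boxLower_le_boxUpper hε hεL) J (fun i x => fderiv ℝ (J i) x) ∅ countable_empty
    (fun i => (hJ i).continuousOn.mono hsub)
    (fun x hx i => ((hJ i).differentiableAt ((isOpen_halfSpace d).mem_nhds
      (hsub (Ioo_subset_Icc_self (pi_univ_Ioo_subset _ _ hx.1))))).hasFDerivAt)
    (hint.neg.congr_fun (fun x hx => (hdiv x (hsub hx)).symm) measurableSet_Icc)
  rw [setIntegral_congr_fun measurableSet_Icc fun x hx => hdiv x (hsub hx), integral_neg] at hstokes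
  rw [neg_eq_iff_eq_neg.1 hstokes, ← Finset.sum_neg_distrib]
  simp only [neg_sub, boxUpper]

theorem HasFluxDecay.setIntegral_box_le (hdecay : HasFluxDecay J K s p δ q) (hs : 0 < s)
    (hK : 0 ≤ K) (hJ : ∀ i, DifferentiableOn ℝ (J i) (halfSpace d))
    (he : ContinuousOn e (halfSpace d))
    (hdiv : ∀ x ∈ halfSpace d, ∑ i, fderiv ℝ (J i) x (Pi.single i 1) = -e x)
    (hε : 0 < ε) (hεL : ε ≤ L) :
    ∫ x in Icc (boxLower d ε L) (boxUpper d L), e x ≤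
      d * (2 * (K * L ^ (-p) * ((2 * L) ^ (d - 1) * (L ^ s / s)))) +
        (K * ε ^ δ * (2 * L) ^ d + K * L ^ (-q) * (2 * L) ^ d) := by
  have hL : 0 < L := hε.trans_le hεL
  have hlateral := fun (a : Fin d) (c : ℝ) (hc : |c| = L) =>
    abs_setIntegral_lateral_face_le (u := J a.castSucc) a hε hεL hs
      (mul_nonneg hK (Real.rpow_nonneg hL.le (-p))) fun x hx (hxc : x a.castSucc = c) => by
        have hxL : |x a.castSucc| = L := hxc ▸ hc
        exact hxL ▸ hdecay.lateral x hx a (abs_pos.1 (hxL ▸ hL))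
  have hbottom := abs_setIntegral_horizontal_face_le (ε := ε) (u := J (Fin.last d)) hL.le
    fun x hx => hx ▸ hdecay.bottom x (hε.trans_eq hx.symm)
  have htop := abs_setIntegral_horizontal_face_le (ε := ε) (u := J (Fin.last d)) hL.le
    fun x hx => hx ▸ hdecay.top x (hL.trans_eq hx.symm)
  rw [setIntegral_box_eq_neg_flux hε hεL hJ he hdiv, Fin.sum_univ_castSucc]
  gcongr ?_ + ?_
  · refine (Finset.sum_le_card_nsmul _ _ _ fun a _ => ?_).trans_eq (by
      rw [Finset.card_univ, Fintype.card_fin, nsmul_eq_mul])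
    rw [boxLower_castSucc]
    linarith [abs_le.1 (hlateral a L (abs_of_pos hL)),
      abs_le.1 (hlateral a (-L) ((abs_neg L).trans (abs_of_pos hL)))]
  · rw [boxLower_last]
    linarith [abs_le.1 hbottom, abs_le.1 htop]

theorem eq_zero_of_setIntegral_nonpos {X : Type*} [TopologicalSpace X] [T2Space X]
    [MeasurableSpace X] [BorelSpace X] {μ : Measure X} [μ.IsOpenPosMeasure]
    [IsFiniteMeasureOnCompacts μ] {f : X → ℝ} {k : Set X} (hk : IsCompact k)
    (hf : ContinuousOn f k) (hf0 : ∀ x ∈ k, 0 ≤ f x) (hint : ∫ x in k, f x ∂μ ≤ 0) {x : X}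
    (hx : x ∈ interior k) : f x = 0 := by
  have hnonneg : 0 ≤ᵐ[μ.restrict k] f :=
    (ae_restrict_iff' hk.measurableSet).2 (Eventually.of_forall hf0)
  have hzero := (integral_eq_zero_iff_of_nonneg_ae hnonneg (hf.integrableOn_compact hk)).1
    (le_antisymm hint (integral_nonneg_of_ae hnonneg))
  exact Measure.eqOn_open_of_ae_eq (ae_restrict_of_ae_restrict_of_subset interior_subset hzero)
    isOpen_interior (hf.mono interior_subset) continuousOn_const hx

theorem mem_interior_Icc_boxLower_boxUpper {x : Fin (d + 1) → ℝ} (hε : ε < x (Fin.last d))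
    (hL : ‖x‖ < L) : x ∈ interior (Icc (boxLower d ε L) (boxUpper d L)) := by
  have habs : ∀ i, |x i| < L := fun i => (norm_le_pi_norm x i).trans_lt hL
  rw [← pi_univ_Icc, interior_pi_set finite_univ]
  refine fun i _ => ?_
  change x i ∈ interior (Icc _ _)
  rw [interior_Icc]
  exact ⟨Fin.lastCases (by simpa using hε) (fun a => by simpa using (abs_lt.1 (habs _)).1) i,
    (abs_lt.1 (habs i)).2⟩

theorem tendsto_rpow_neg_mul_two_mul_pow_atTop {m : ℕ} {r : ℝ} (h : m < r) :
    Tendsto (fun L : ℝ => L ^ (-r) * (2 * L) ^ m) atTop (𝓝 0) := by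
  have hlim := (tendsto_rpow_neg_atTop (sub_pos.2 h)).const_mul ((2 : ℝ) ^ m)
  rw [mul_zero] at hlim
  refine hlim.congr' ?_
  filter_upwards [eventually_gt_atTop 0] with L hL
  rw [mul_pow, mul_left_comm, ← Real.rpow_natCast L m, ← Real.rpow_add hL]
  ring_nf

theorem setIntegral_box_mono {ε' L' : ℝ} (he : ContinuousOn e (halfSpace d))
    (he0 : ∀ x ∈ halfSpace d, 0 ≤ e x) (hε' : 0 < ε') (hεε' : ε' ≤ ε) (hLL' : L ≤ L') :
    ∫ x in Icc (boxLower d ε L) (boxUpper d L), e x ≤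
      ∫ x in Icc (boxLower d ε' L') (boxUpper d L'), e x := by
  have hsub := Icc_boxLower_boxUpper_subset_halfSpace (d := d) (L := L') hε'
  exact setIntegral_mono_set ((he.mono hsub).integrableOn_compact isCompact_Icc)
    ((ae_restrict_iff' measurableSet_Icc).2 (Eventually.of_forall fun z hz => he0 z (hsub hz)))
    (Icc_boxLower_boxUpper_mono hεε' hLL').eventuallyLE

theorem HasFluxDecay.setIntegral_box_le_lateral_add_top (hdecay : HasFluxDecay J K s p δ q)
    (hs : 0 < s) (hδ : 0 < δ) (hK : 0 ≤ K) (hJ : ∀ i, DifferentiableOn ℝ (J i) (halfSpace d))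
    (he : ContinuousOn e (halfSpace d)) (he0 : ∀ x ∈ halfSpace d, 0 ≤ e x)
    (hdiv : ∀ x ∈ halfSpace d, ∑ i, fderiv ℝ (J i) x (Pi.single i 1) = -e x)
    (hε : 0 < ε) (hεL : ε ≤ L) :
    ∫ x in Icc (boxLower d ε L) (boxUpper d L), e x ≤
      d * (2 * (K * L ^ (-p) * ((2 * L) ^ (d - 1) * (L ^ s / s)))) +
        K * L ^ (-q) * (2 * L) ^ d := by
  have hrpow : Tendsto (fun ε' : ℝ => ε' ^ δ) (𝓝[>] 0) (𝓝 0) := by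
    have hcont := (Real.continuousAt_rpow_const 0 δ (Or.inr hδ.le)).tendsto
    rw [Real.zero_rpow hδ.ne'] at hcont
    exact hcont.mono_left nhdsWithin_le_nhds
  have hlim := (((hrpow.const_mul K).mul_const ((2 * L) ^ d)).add_const
    (K * L ^ (-q) * (2 * L) ^ d)).const_add
    (d * (2 * (K * L ^ (-p) * ((2 * L) ^ (d - 1) * (L ^ s / s)))))
  rw [mul_zero, zero_mul, zero_add] at hlim
  refine ge_of_tendsto hlim ?_
  filter_upwards [Ioc_mem_nhdsGT hε] with ε' hε'
  exact (setIntegral_box_mono he he0 hε'.1 hε'.2 le_rfl).trans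
    (hdecay.setIntegral_box_le hs hK hJ he hdiv hε'.1 (hε'.2.trans hεL))

theorem HasFluxDecay.setIntegral_box_nonpos (hdecay : HasFluxDecay J K s p δ q) (hs : 0 < s)
    (hp : (d - 1 : ℕ) < p - s) (hδ : 0 < δ) (hq : d < q) (hK : 0 ≤ K)
    (hJ : ∀ i, DifferentiableOn ℝ (J i) (halfSpace d)) (he : ContinuousOn e (halfSpace d))
    (he0 : ∀ x ∈ halfSpace d, 0 ≤ e x)
    (hdiv : ∀ x ∈ halfSpace d, ∑ i, fderiv ℝ (J i) x (Pi.single i 1) = -e x) (hε : 0 < ε) :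
    ∫ x in Icc (boxLower d ε L) (boxUpper d L), e x ≤ 0 := by
  have hlim : Tendsto (fun L' : ℝ => 2 * d * K / s * (L' ^ (-(p - s)) * (2 * L') ^ (d - 1)) +
      K * (L' ^ (-q) * (2 * L') ^ d)) atTop (𝓝 0) := by
    simpa using ((tendsto_rpow_neg_mul_two_mul_pow_atTop hp).const_mul (2 * d * K / s)).add
      ((tendsto_rpow_neg_mul_two_mul_pow_atTop hq).const_mul K)
  refine ge_of_tendsto hlim ?_
  filter_upwards [eventually_ge_atTop L, eventually_ge_atTop ε] with L' hLL' hεL'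
  refine ((setIntegral_box_mono he he0 hε le_rfl hLL').trans
    (hdecay.setIntegral_box_le_lateral_add_top hs hδ hK hJ he he0 hdiv hε hεL')).trans_eq ?_
  rw [neg_sub, sub_eq_add_neg, add_comm s, Real.rpow_add (hε.trans_le hεL')]
  ring

theorem HasFluxDecay.density_eq_zero (hdecay : HasFluxDecay J K s p δ q) (hs : 0 < s)
    (hp : (d - 1 : ℕ) < p - s) (hδ : 0 < δ) (hq : d < q) (hK : 0 ≤ K)
    (hJ : ∀ i, DifferentiableOn ℝ (J i) (halfSpace d)) (he : ContinuousOn e (halfSpace d))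
    (he0 : ∀ x ∈ halfSpace d, 0 ≤ e x)
    (hdiv : ∀ x ∈ halfSpace d, ∑ i, fderiv ℝ (J i) x (Pi.single i 1) = -e x)
    {x : Fin (d + 1) → ℝ} (hx : x ∈ halfSpace d) : e x = 0 := by
  obtain ⟨ε, hε, hεx⟩ := exists_between (show 0 < x (Fin.last d) from hx)
  have hsub := Icc_boxLower_boxUpper_subset_halfSpace (d := d) (L := ‖x‖ + 1) hε
  exact eq_zero_of_setIntegral_nonpos isCompact_Icc (he.mono hsub) (fun z hz => he0 z (hsub hz))
    (hdecay.setIntegral_box_nonpos hs hp hδ hq hK hJ he he0 hdiv hε)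
    (mem_interior_Icc_boxLower_boxUpper hεx (lt_add_one _))

end Flux

section Calculus

variable {ι E F G : Type*} [Fintype ι] [DecidableEq ι] [NormedAddCommGroup E] [NormedSpace ℝ E]
  [NormedAddCommGroup F] [NormedSpace ℝ F] [NormedAddCommGroup G] [NormedSpace ℝ G]

/-- The partial derivative of `f` in the `i`-th coordinate direction, as a value of the Fréchet
derivative; unlike `pd4` it applies to maps into any normed space. -/
noncomputable def pd (i : ι) (f : (ι → ℝ) → E) (x : ι → ℝ) : E :=
  fderiv ℝ f x (Pi.single i 1)

variable {f g : (ι → ℝ) → E} {x : ι → ℝ}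

theorem hasDerivAt_comp_update (hf : DifferentiableAt ℝ f x) (i : ι) :
    HasDerivAt (fun t => f (Function.update x i t)) (pd i f x) (x i) := by
  have hf' : HasFDerivAt f (fderiv ℝ f x) (Function.update x i (x i)) := by
    rw [Function.update_eq_self]
    exact hf.hasFDerivAt
  exact hf'.comp_hasDerivAt (x i) (hasDerivAt_update x i (x i))

theorem pd_add (hf : DifferentiableAt ℝ f x) (hg : DifferentiableAt ℝ g x) (i : ι) :
    pd i (f + g) x = pd i f x + pd i g x := by
  simp only [pd, fderiv_add hf hg, _root_.add_apply]

theorem pd_sub (hf : DifferentiableAt ℝ f x) (hg : DifferentiableAt ℝ g x) (i : ι) :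
    pd i (f - g) x = pd i f x - pd i g x := by
  simp only [pd, fderiv_sub hf hg, _root_.sub_apply]

theorem pd_neg (i : ι) : pd i (-f) x = -pd i f x := by
  simp only [pd, fderiv_neg, _root_.neg_apply]

theorem pd_bilinear (B : E →L[ℝ] F →L[ℝ] G) {h : (ι → ℝ) → F} (hf : DifferentiableAt ℝ f x)
    (hh : DifferentiableAt ℝ h x) (i : ι) :
    pd i (fun z => B (f z) (h z)) x = B (pd i f x) (h x) + B (f x) (pd i h x) := by
  simp only [pd, B.fderiv_of_bilinear hf hh, _root_.add_apply,
    ContinuousLinearMap.precompR_apply, ContinuousLinearMap.precompL_apply]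
  exact add_comm _ _

theorem contDiffAt_pd {m k : WithTop ℕ∞} (hf : ContDiffAt ℝ k f x) (hmk : m + 1 ≤ k) (i : ι) :
    ContDiffAt ℝ m (pd i f) x :=
  (hf.fderiv_right hmk).clm_apply contDiffAt_const

theorem pd_comm (hf : ContDiffAt ℝ 2 f x) (i j : ι) : pd i (pd j f) x = pd j (pd i f) x := by
  have hdiff : DifferentiableAt ℝ (fderiv ℝ f) x :=
    (hf.fderiv_right (m := 1) le_rfl).differentiableAt one_ne_zero
  have hpd : ∀ k l : ι, pd k (pd l f) x =
      fderiv ℝ (fderiv ℝ f) x (Pi.single k 1) (Pi.single l 1) := fun k l => by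
    change fderiv ℝ (fun z => fderiv ℝ f z (Pi.single l 1)) x (Pi.single k 1) = _
    rw [fderiv_clm_apply hdiff (differentiableAt_const _)]
    simp
  rw [hpd, hpd, (hf.isSymmSndFDerivAt (by simp)).eq]

end Calculus

section TraceForm

variable {n : ℕ}

/-- The invariant inner product `⟪X, Y⟫ = -Re tr (XY)`; it is positive definite on skew-Hermitian
matrices. -/
noncomputable def trForm (n : ℕ) : LinearMap.BilinForm ℝ (Matrix (Fin n) (Fin n) ℂ) :=
  -(LinearMap.mul ℝ (Matrix (Fin n) (Fin n) ℂ)).compr₂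
    (Complex.reLm ∘ₗ (Matrix.traceLinearMap (Fin n) ℂ ℂ).restrictScalars ℝ)

local notation "⟪" X ", " Y "⟫" => trForm _ X Y

theorem trForm_apply (X Y : Matrix (Fin n) (Fin n) ℂ) : ⟪X, Y⟫ = -(X * Y).trace.re :=
  rfl

theorem trForm_comm (X Y : Matrix (Fin n) (Fin n) ℂ) : ⟪X, Y⟫ = ⟪Y, X⟫ := by
  rw [trForm_apply, trForm_apply, Matrix.trace_mul_comm]

theorem trForm_lie_left (X Y Z : Matrix (Fin n) (Fin n) ℂ) : ⟪⁅X, Y⁆, Z⟫ = ⟪X, ⁅Y, Z⁆⟫ := by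
  simp only [trForm_apply, Ring.lie_def, sub_mul, mul_sub, Matrix.trace_sub, ← mul_assoc]
  rw [mul_assoc Y X Z, Matrix.trace_mul_comm Y]

/-- The Lie bracket of matrices as a continuous bilinear map. -/
noncomputable def lieCLM (n : ℕ) :
    Matrix (Fin n) (Fin n) ℂ →L[ℝ] Matrix (Fin n) (Fin n) ℂ →L[ℝ] Matrix (Fin n) (Fin n) ℂ :=
  LinearMap.toContinuousBilinearMap
    (LieAlgebra.ad ℝ (Matrix (Fin n) (Fin n) ℂ)).toLinearMap

/-- `trForm` as a continuous bilinear map. -/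
noncomputable def trFormCLM (n : ℕ) :
    Matrix (Fin n) (Fin n) ℂ →L[ℝ] Matrix (Fin n) (Fin n) ℂ →L[ℝ] ℝ :=
  LinearMap.toContinuousBilinearMap (trForm n)

variable {E : Type*} [NormedAddCommGroup E] [NormedSpace ℝ E]
  {f g : E → Matrix (Fin n) (Fin n) ℂ} {x : E} {k : WithTop ℕ∞}

theorem contDiffAt_lie (hf : ContDiffAt ℝ k f x) (hg : ContDiffAt ℝ k g x) :
    ContDiffAt ℝ k (fun z => ⁅f z, g z⁆) x :=
  (lieCLM n).isBoundedBilinearMap.contDiff.comp_contDiffAt x (hf.prodMk hg)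

theorem contDiffAt_trForm (hf : ContDiffAt ℝ k f x) (hg : ContDiffAt ℝ k g x) :
    ContDiffAt ℝ k (fun z => ⟪f z, g z⟫) x := by
  have h := (trFormCLM n).isBoundedBilinearMap.contDiff.comp_contDiffAt x (hf.prodMk hg)
  exact h

end TraceForm

section Gauge

local notation "⟪" X ", " Y "⟫" => trForm _ X Y

variable {ι : Type*} [DecidableEq ι] {n : ℕ}

/-- The covariant derivative `D_i f = ∂_i f + [A_i, f]` of an adjoint-valued field. -/
noncomputable def covDeriv (A : (ι → ℝ) → ι → Matrix (Fin n) (Fin n) ℂ) (i : ι)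
    (f : (ι → ℝ) → Matrix (Fin n) (Fin n) ℂ) (x : ι → ℝ) : Matrix (Fin n) (Fin n) ℂ :=
  pd i f x + ⁅A x i, f x⁆

/-- The curvature `F_{ij} = ∂_i A_j - ∂_j A_i + [A_i, A_j]` of a connection on `ℝ^ι`. -/
noncomputable def curvature (A : (ι → ℝ) → ι → Matrix (Fin n) (Fin n) ℂ) (i j : ι)
    (x : ι → ℝ) : Matrix (Fin n) (Fin n) ℂ :=
  pd i (fun z => A z j) x - pd j (fun z => A z i) x + ⁅A x i, A x j⁆

theorem curvature_swap (A : (ι → ℝ) → ι → Matrix (Fin n) (Fin n) ℂ) (i j : ι) :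
    curvature A j i = -curvature A i j := by
  ext1 z
  rw [Pi.neg_apply, curvature, curvature, ← lie_skew (A z i)]
  abel

variable [Fintype ι] {A : (ι → ℝ) → ι → Matrix (Fin n) (Fin n) ℂ}
  {f g h : (ι → ℝ) → Matrix (Fin n) (Fin n) ℂ} {x : ι → ℝ}

theorem contDiffAt_covDeriv (hA : ContDiffAt ℝ 1 A x) (hf : ContDiffAt ℝ 2 f x) (i : ι) :
    ContDiffAt ℝ 1 (covDeriv A i f) x :=
  (contDiffAt_pd hf le_rfl i).add
    (contDiffAt_lie (contDiffAt_pi.1 hA i) (hf.of_le one_le_two))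

theorem contDiffAt_curvature (hA : ContDiffAt ℝ 2 A x) (i j : ι) :
    ContDiffAt ℝ 1 (curvature A i j) x :=
  ((contDiffAt_pd (contDiffAt_pi.1 hA j) le_rfl i).sub
    (contDiffAt_pd (contDiffAt_pi.1 hA i) le_rfl j)).add
    (contDiffAt_lie (contDiffAt_pi.1 (hA.of_le one_le_two) i)
      (contDiffAt_pi.1 (hA.of_le one_le_two) j))

theorem pd_lie (hf : DifferentiableAt ℝ f x) (hg : DifferentiableAt ℝ g x) (i : ι) :
    pd i (fun z => ⁅f z, g z⁆) x = ⁅pd i f x, g x⁆ + ⁅f x, pd i g x⁆ :=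
  pd_bilinear (lieCLM n) hf hg i

theorem covDeriv_lie (hf : DifferentiableAt ℝ f x) (hg : DifferentiableAt ℝ g x) (i : ι) :
    covDeriv A i (fun z => ⁅f z, g z⁆) x = ⁅covDeriv A i f x, g x⁆ + ⁅f x, covDeriv A i g x⁆ := by
  simp only [covDeriv, pd_lie hf hg, add_lie, lie_add, leibniz_lie (A x i)]
  abel

theorem pd_covDeriv (hA : ContDiffAt ℝ 1 A x) (hf : ContDiffAt ℝ 2 f x) (i j : ι) :
    pd i (covDeriv A j f) x =
      pd i (pd j f) x + (⁅pd i (fun z => A z j) x, f x⁆ + ⁅A x j, pd i f x⁆) := by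
  have hAj := (contDiffAt_pi.1 hA j)
  rw [← pd_lie (hAj.differentiableAt one_ne_zero) (hf.differentiableAt two_ne_zero)]
  exact pd_add ((contDiffAt_pd hf le_rfl j).differentiableAt one_ne_zero)
    ((contDiffAt_lie hAj (hf.of_le one_le_two)).differentiableAt one_ne_zero) i

theorem covDeriv_comm (hA : ContDiffAt ℝ 1 A x) (hf : ContDiffAt ℝ 2 f x) (i j : ι) :
    covDeriv A i (covDeriv A j f) x - covDeriv A j (covDeriv A i f) x =
      ⁅curvature A i j x, f x⁆ := by
  have hcovDeriv : ∀ k l, covDeriv A k (covDeriv A l f) x =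
      pd k (covDeriv A l f) x + ⁅A x k, covDeriv A l f x⁆ := fun _ _ => rfl
  rw [hcovDeriv, hcovDeriv, pd_covDeriv hA hf, pd_covDeriv hA hf, pd_comm hf i j]
  simp only [covDeriv, curvature, add_lie, sub_lie, lie_add, lie_lie]
  abel

theorem pd_curvature (hA : ContDiffAt ℝ 2 A x) (i j k : ι) :
    pd i (curvature A j k) x =
      pd i (pd j fun z => A z k) x - pd i (pd k fun z => A z j) x +
        (⁅pd i (fun z => A z j) x, A x k⁆ + ⁅A x j, pd i (fun z => A z k) x⁆) := by
  have hA' := fun l => (contDiffAt_pi.1 hA l).differentiableAt two_ne_zero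
  have hpd := fun l m => (contDiffAt_pd (contDiffAt_pi.1 hA m) le_rfl l).differentiableAt
    one_ne_zero
  rw [← pd_lie (hA' j) (hA' k), ← pd_sub (hpd j k) (hpd k j)]
  exact pd_add ((hpd j k).sub (hpd k j))
    ((contDiffAt_lie (contDiffAt_pi.1 hA j) (contDiffAt_pi.1 hA k)).differentiableAt
      two_ne_zero) i

theorem bianchi (hA : ContDiffAt ℝ 2 A x) (i j k : ι) :
    covDeriv A i (curvature A j k) x + covDeriv A j (curvature A k i) x +
      covDeriv A k (curvature A i j) x = 0 := by
  have hA' := contDiffAt_pi.1 hA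
  have hjacobi := lie_jacobi (A x i) (A x j) (A x k)
  simp only [covDeriv, pd_curvature hA, pd_comm (hA' k) i j, pd_comm (hA' i) j k,
    pd_comm (hA' j) k i, curvature, lie_add, lie_sub]
  rw [← lie_skew (A x k) (pd i _ x), ← lie_skew (A x j) (pd i _ x), ← lie_skew (A x i) (pd j _ x),
    ← lie_skew (A x k) (pd j _ x), ← lie_skew (A x i) (pd k _ x), ← lie_skew (A x j) (pd k _ x),
    ← hjacobi]
  abel

theorem pd_trForm (A : (ι → ℝ) → ι → Matrix (Fin n) (Fin n) ℂ) (hf : DifferentiableAt ℝ f x)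
    (hg : DifferentiableAt ℝ g x) (i : ι) :
    pd i (fun z => ⟪f z, g z⟫) x = ⟪covDeriv A i f x, g x⟫ + ⟪f x, covDeriv A i g x⟫ := by
  have hinv : ⟪⁅A x i, f x⁆, g x⟫ + ⟪f x, ⁅A x i, g x⁆⟫ = 0 := by
    rw [← trForm_lie_left, ← lie_skew, map_neg, LinearMap.neg_apply, neg_add_cancel]
  have hpd : pd i (fun z => ⟪f z, g z⟫) x = ⟪pd i f x, g x⟫ + ⟪f x, pd i g x⟫ :=
    pd_bilinear (trFormCLM n) hf hg i
  rw [hpd]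
  simp only [covDeriv, map_add, LinearMap.add_apply]
  linear_combination -hinv

/-- Trading `D_i D_j` for `D_j D_i` inside a pure divergence costs only a curvature term. -/
theorem pd_trForm_covDeriv_sub (hA : ContDiffAt ℝ 1 A x) (hf : DifferentiableAt ℝ f x)
    (hg : ContDiffAt ℝ 2 g x) (i j : ι) :
    pd i (fun z => ⟪f z, covDeriv A j g z⟫) x - pd j (fun z => ⟪f z, covDeriv A i g z⟫) x =
      ⟪covDeriv A i f x, covDeriv A j g x⟫ - ⟪covDeriv A j f x, covDeriv A i g x⟫ -
        ⟪curvature A i j x, ⁅f x, g x⁆⟫ := by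
  have hD := fun k => (contDiffAt_covDeriv hA hg k).differentiableAt one_ne_zero
  have hcomm : ⟪f x, covDeriv A i (covDeriv A j g) x⟫ - ⟪f x, covDeriv A j (covDeriv A i g) x⟫ =
      -⟪curvature A i j x, ⁅f x, g x⁆⟫ := by
    rw [← map_sub, covDeriv_comm hA hg, trForm_comm, trForm_lie_left, ← lie_skew, map_neg]
  rw [pd_trForm A hf (hD j), pd_trForm A hf (hD i)]
  linear_combination hcomm

theorem pd_trForm_curvature_cyclic (hA : ContDiffAt ℝ 2 A x) (hf : DifferentiableAt ℝ f x)
    (i j k : ι) :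
    pd i (fun z => ⟪f z, curvature A j k z⟫) x + pd j (fun z => ⟪f z, curvature A k i z⟫) x +
        pd k (fun z => ⟪f z, curvature A i j z⟫) x =
      ⟪covDeriv A i f x, curvature A j k x⟫ + ⟪covDeriv A j f x, curvature A k i x⟫ +
        ⟪covDeriv A k f x, curvature A i j x⟫ := by
  have hF := fun l m => (contDiffAt_curvature hA l m).differentiableAt one_ne_zero
  have hbianchi := congrArg (trForm n (f x)) (bianchi hA i j k)
  rw [map_add, map_add, map_zero] at hbianchi
  rw [pd_trForm A hf (hF j k), pd_trForm A hf (hF k i), pd_trForm A hf (hF i j)]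
  linear_combination hbianchi

theorem pd_trForm_lie (A : (ι → ℝ) → ι → Matrix (Fin n) (Fin n) ℂ) (hf : DifferentiableAt ℝ f x)
    (hg : DifferentiableAt ℝ g x) (hh : DifferentiableAt ℝ h x) (i : ι) :
    pd i (fun z => ⟪f z, ⁅g z, h z⁆⟫) x = ⟪covDeriv A i f x, ⁅g x, h x⁆⟫ +
      ⟪covDeriv A i g x, ⁅h x, f x⁆⟫ + ⟪covDeriv A i h x, ⁅f x, g x⁆⟫ := by
  have hlie : DifferentiableAt ℝ (fun z => ⁅g z, h z⁆) x :=
    ((lieCLM n).hasFDerivAt_of_bilinear hg.hasFDerivAt hh.hasFDerivAt).differentiableAt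
  rw [pd_trForm A hf hlie, covDeriv_lie hg hh, map_add, trForm_comm (f x), trForm_lie_left,
    ← trForm_lie_left (f x), trForm_comm ⁅f x, g x⁆]
  ring

end Gauge

section SplitForm

theorem sum_eps4_tangential {M : Type*} [AddCommGroup M] [Module ℂ M] (P : Fin 4 → Fin 4 → M)
    (a : Fin 3) :
    ∑ k, ∑ l, eps4 (sp (a + 1)) (sp (a + 2)) k l • P k l = P (sp a) 3 - P 3 (sp a) := by
  fin_cases a <;> simp [Fin.sum_univ_four, eps4, sp] <;> norm_num <;> abel

theorem sum_eps4_normal {M : Type*} [AddCommGroup M] [Module ℂ M] (P : Fin 4 → Fin 4 → M)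
    (a : Fin 3) :
    ∑ k, ∑ l, eps4 (sp a) 3 k l • P k l =
      P (sp (a + 1)) (sp (a + 2)) - P (sp (a + 2)) (sp (a + 1)) := by
  fin_cases a <;> simp [Fin.sum_univ_four, eps4, sp] <;> norm_num <;> abel

/-- The KW equations at a point, split along the boundary directions `a ∈ {0, 1, 2}` and the
normal direction `3`: `F`, `P` and `S` are the values of `F_{ij}`, `D_i φ_j` and `[φ_i, φ_j]`, and
`(a, a + 1, a + 2)` runs through the cyclic permutations of the boundary directions. -/
structure KWSplit {M : Type*} [AddCommGroup M] (F P S : Fin 4 → Fin 4 → M) : Prop where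
  tangential : ∀ a : Fin 3, F (sp (a + 1)) (sp (a + 2)) - S (sp (a + 1)) (sp (a + 2)) +
    (P (sp a) 3 - P 3 (sp a)) = 0
  normal : ∀ a : Fin 3, F (sp a) 3 - S (sp a) 3 +
    (P (sp (a + 1)) (sp (a + 2)) - P (sp (a + 2)) (sp (a + 1))) = 0
  divergence : ∑ a : Fin 3, P (sp a) (sp a) + P 3 3 = 0

theorem KWSplit.of_eps4 {M : Type*} [AddCommGroup M] [Module ℂ M] {F P S : Fin 4 → Fin 4 → M}
    (h : ∀ i j, F i j - S i j + ∑ k, ∑ l, eps4 i j k l • P k l = 0) (hdiv : ∑ i, P i i = 0) :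
    KWSplit F P S where
  tangential a := by rw [← sum_eps4_tangential, h]
  normal a := by rw [← sum_eps4_normal, h]
  divergence := by rwa [Fin.sum_univ_castSucc] at hdiv

variable {M : Type*} [AddCommGroup M] [Module ℝ M] {F P S : Fin 4 → Fin 4 → M}

/-- The terms of `kwEnergy` attached to the boundary direction `a`. The complete square of Nahm's
equation is kept together because its two terms do not decay separately. -/
noncomputable def kwEnergyRow (B : LinearMap.BilinForm ℝ M) (F P S : Fin 4 → Fin 4 → M)
    (a : Fin 3) : ℝ :=
  B (F (sp (a + 1)) (sp (a + 2))) (F (sp (a + 1)) (sp (a + 2))) + B (F (sp a) 3) (F (sp a) 3) +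
    B (P (sp a) 3) (P (sp a) 3) +
    B (P 3 (sp a) + S (sp (a + 1)) (sp (a + 2))) (P 3 (sp a) + S (sp (a + 1)) (sp (a + 2))) +
    B (S (sp a) 3) (S (sp a) 3) + ∑ b : Fin 3, B (P (sp a) (sp b)) (P (sp a) (sp b))

/-- The KW energy density `½ (|F|² + |D_a φ_b|² + |D_a φ₃|² + |D₃ φ₃|² + |D₃ φ_a + [φ_b, φ_c]|² +
|[φ_a, φ₃]|²)` with respect to an inner product `B`. -/
noncomputable def kwEnergy (B : LinearMap.BilinForm ℝ M) (F P S : Fin 4 → Fin 4 → M) : ℝ :=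
  (∑ a, kwEnergyRow B F P S a + B (P 3 3) (P 3 3)) / 2

/-- The divergence of `kwCurrent`, as a bilinear expression in curvature, covariant derivatives and
brackets. -/
noncomputable def kwFluxDensity (B : LinearMap.BilinForm ℝ M) (F P S : Fin 4 → Fin 4 → M) : ℝ :=
  ∑ a : Fin 3, (B (P (sp a) (sp a)) (P (sp (a + 1)) (sp (a + 1))) -
    B (P (sp (a + 1)) (sp a)) (P (sp a) (sp (a + 1))) + B (P (sp a) (sp a)) (P 3 3) -
    B (P 3 (sp a)) (P (sp a) 3) - B (F (sp (a + 1)) (sp (a + 2))) (S (sp (a + 1)) (sp (a + 2))) -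
    B (F (sp a) 3) (S (sp a) 3) +
    B (P (sp a) 3 - P 3 (sp a)) (F (sp (a + 1)) (sp (a + 2)) - S (sp (a + 1)) (sp (a + 2))) -
    B (P 3 (sp a)) (S (sp (a + 1)) (sp (a + 2))) +
    B (P (sp (a + 1)) (sp (a + 2)) - P (sp (a + 2)) (sp (a + 1))) (F (sp a) 3 - S (sp a) 3))

theorem bilinForm_add_self {B : LinearMap.BilinForm ℝ M} (hB : ∀ X Y, B X Y = B Y X) (X Y : M) :
    B (X + Y) (X + Y) = B X X + B Y Y + 2 * B X Y := by
  simp only [map_add, LinearMap.add_apply, hB Y X]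
  ring

theorem bilinForm_sub_self {B : LinearMap.BilinForm ℝ M} (hB : ∀ X Y, B X Y = B Y X) (X Y : M) :
    B (X - Y) (X - Y) = B X X + B Y Y - 2 * B X Y := by
  simp only [map_sub, LinearMap.sub_apply, hB Y X]
  ring

theorem bilinForm_of_sub_add_eq_zero {B : LinearMap.BilinForm ℝ M} (hB : ∀ X Y, B X Y = B Y X)
    {X Y Z : M} (h : X - Y + Z = 0) :
    B Z (X - Y) - B X Y = -(B X X + B Y Y + B Z Z) / 2 := by
  have hsq := bilinForm_sub_self hB X Y
  rw [eq_neg_of_add_eq_zero_left h] at hsq ⊢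
  simp only [map_neg, LinearMap.neg_apply] at hsq ⊢
  linear_combination -hsq / 2

/-- Expanding the squares of the equations themselves turns the cross terms of the flux density into
the sum of squares. -/
theorem KWSplit.kwFluxDensity_eq {B : LinearMap.BilinForm ℝ M} (h : KWSplit F P S)
    (hB : ∀ X Y, B X Y = B Y X) : kwFluxDensity B F P S = -kwEnergy B F P S := by
  have hsplit := Fintype.sum_congr _ _ fun a : Fin 3 =>
    congrArg₂ (· + ·) (bilinForm_of_sub_add_eq_zero hB (h.tangential a))
      (bilinForm_of_sub_add_eq_zero hB (h.normal a))
  have hdiv := congrArg₂ (B · ·) h.divergence h.divergence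
  simp only [bilinForm_sub_self hB, Fin.sum_univ_three, zero_add, Fin.reduceAdd, map_add,
    LinearMap.add_apply, map_zero, hB (P (sp 1) (sp 1)) (P (sp 0) (sp 0)),
    hB (P (sp 2) (sp 2)) (P (sp 0) (sp 0)), hB (P (sp 2) (sp 2)) (P (sp 1) (sp 1)), hB (P 3 3)]
    at hsplit hdiv
  simp only [kwFluxDensity, kwEnergy, kwEnergyRow, bilinForm_add_self hB,
    Fin.sum_univ_three, zero_add, Fin.reduceAdd, hB (P 3 _) (P _ 3),
    hB (P (sp 2) (sp 2)) (P (sp 0) (sp 0))]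
  linear_combination hsplit + hdiv / 2 + hB (P (sp 0) (sp 1)) (P (sp 1) (sp 0)) +
    hB (P (sp 1) (sp 2)) (P (sp 2) (sp 1)) + hB (P (sp 2) (sp 0)) (P (sp 0) (sp 2))

/-- The fields at a point at which `kwEnergy` vanishes: the connection is flat, `φ_a` and `φ₃` are
covariantly constant along the boundary, `φ₃` commutes with `φ_a`, and Nahm's equations hold. -/
structure IsFlatNahm {M : Type*} [AddCommGroup M] (F P S : Fin 4 → Fin 4 → M) : Prop where
  curvature_tangential : ∀ a : Fin 3, F (sp (a + 1)) (sp (a + 2)) = 0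
  curvature_normal : ∀ a : Fin 3, F (sp a) 3 = 0
  covDeriv_tangential : ∀ a b : Fin 3, P (sp a) (sp b) = 0
  covDeriv_normal : ∀ i : Fin 4, P i 3 = 0
  lie_normal : ∀ a : Fin 3, S (sp a) 3 = 0
  nahm : ∀ a : Fin 3, P 3 (sp a) + S (sp (a + 1)) (sp (a + 2)) = 0

theorem IsFlatNahm.curvature_eq_zero (h : IsFlatNahm F P S) (hF : ∀ i j, F j i = -F i j)
    (i j : Fin 4) : F i j = 0 := by
  have hdiag : ∀ i, F i i = 0 := fun i => by
    have htwo : (2 : ℝ) • F i i = 0 := by rw [two_smul, add_eq_zero_iff_eq_neg, ← hF]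
    exact (smul_eq_zero_iff_right two_ne_zero).1 htwo
  have hnormal := h.curvature_normal
  have htangential := h.curvature_tangential
  have hswap : ∀ {i j}, F i j = 0 → F j i = 0 := fun {i j} h => by rw [hF i j, h, neg_zero]
  fin_cases i <;> fin_cases j
  exacts [hdiag 0, htangential 2, hswap (htangential 1), hnormal 0, hswap (htangential 2), hdiag 1,
    htangential 0, hnormal 1, htangential 1, hswap (htangential 0), hdiag 2, hnormal 2,
    hswap (hnormal 0), hswap (hnormal 1), hswap (hnormal 2), hdiag 3]

variable {B : LinearMap.BilinForm ℝ M} {N : AddSubgroup M}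

theorem kwEnergyRow_nonneg (hB : ∀ X ∈ N, 0 ≤ B X X) (hF : ∀ i j, F i j ∈ N)
    (hP : ∀ i j, P i j ∈ N) (hS : ∀ i j, S i j ∈ N) (a : Fin 3) : 0 ≤ kwEnergyRow B F P S a := by
  have hsum := Finset.sum_nonneg fun b (_ : b ∈ Finset.univ) => hB _ (hP (sp a) (sp b))
  rw [kwEnergyRow]
  linarith [hB _ (hF (sp (a + 1)) (sp (a + 2))), hB _ (hF (sp a) 3), hB _ (hP (sp a) 3),
    hB _ (hS (sp a) 3), hB _ (N.add_mem (hP 3 (sp a)) (hS (sp (a + 1)) (sp (a + 2))))]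

theorem kwEnergy_nonneg (hB : ∀ X ∈ N, 0 ≤ B X X) (hF : ∀ i j, F i j ∈ N) (hP : ∀ i j, P i j ∈ N)
    (hS : ∀ i j, S i j ∈ N) : 0 ≤ kwEnergy B F P S :=
  div_nonneg (add_nonneg (Finset.sum_nonneg fun a _ => kwEnergyRow_nonneg hB hF hP hS a)
    (hB _ (hP 3 3))) zero_le_two

theorem eq_zero_of_kwEnergyRow_eq_zero (hB : ∀ X ∈ N, 0 ≤ B X X)
    (hB0 : ∀ X ∈ N, B X X = 0 → X = 0) (hF : ∀ i j, F i j ∈ N) (hP : ∀ i j, P i j ∈ N)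
    (hS : ∀ i j, S i j ∈ N) {a : Fin 3} (h : kwEnergyRow B F P S a = 0) :
    F (sp (a + 1)) (sp (a + 2)) = 0 ∧ F (sp a) 3 = 0 ∧ P (sp a) 3 = 0 ∧
      P 3 (sp a) + S (sp (a + 1)) (sp (a + 2)) = 0 ∧ S (sp a) 3 = 0 ∧
      ∀ b : Fin 3, P (sp a) (sp b) = 0 := by
  have hPS_mem := N.add_mem (hP 3 (sp a)) (hS (sp (a + 1)) (sp (a + 2)))
  have hF₁ := hB _ (hF (sp (a + 1)) (sp (a + 2)))
  have hF₂ := hB _ (hF (sp a) 3)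
  have hP₁ := hB _ (hP (sp a) 3)
  have hPS := hB _ hPS_mem
  have hS₁ := hB _ (hS (sp a) 3)
  have hP₂ := fun b (_ : b ∈ Finset.univ) => hB _ (hP (sp a) (sp b))
  rw [kwEnergyRow, add_eq_zero_iff_of_nonneg (by positivity) (Finset.sum_nonneg hP₂),
    Finset.sum_eq_zero_iff_of_nonneg hP₂, add_eq_zero_iff_of_nonneg (by positivity) hS₁,
    add_eq_zero_iff_of_nonneg (by positivity) hPS, add_eq_zero_iff_of_nonneg (by positivity) hP₁,
    add_eq_zero_iff_of_nonneg hF₁ hF₂] at h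
  obtain ⟨⟨⟨⟨⟨hF₁, hF₂⟩, hP₁⟩, hPS⟩, hS₁⟩, hP₂⟩ := h
  exact ⟨hB0 _ (hF _ _) hF₁, hB0 _ (hF _ _) hF₂, hB0 _ (hP _ _) hP₁, hB0 _ hPS_mem hPS,
    hB0 _ (hS _ _) hS₁, fun b => hB0 _ (hP _ _) (hP₂ b (Finset.mem_univ b))⟩

theorem IsFlatNahm.of_kwEnergy_eq_zero (hB : ∀ X ∈ N, 0 ≤ B X X)
    (hB0 : ∀ X ∈ N, B X X = 0 → X = 0) (hF : ∀ i j, F i j ∈ N) (hP : ∀ i j, P i j ∈ N)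
    (hS : ∀ i j, S i j ∈ N) (h : kwEnergy B F P S = 0) : IsFlatNahm F P S := by
  have hrows := fun a (_ : a ∈ Finset.univ) => kwEnergyRow_nonneg hB hF hP hS a
  have hsum : ∑ a, kwEnergyRow B F P S a + B (P 3 3) (P 3 3) = 0 := by
    rw [kwEnergy] at h
    linarith
  rw [add_eq_zero_iff_of_nonneg (Finset.sum_nonneg hrows) (hB _ (hP 3 3)),
    Finset.sum_eq_zero_iff_of_nonneg hrows] at hsum
  choose hF₁ hF₂ hP₁ hPS hS₁ hP₂ using fun a =>
    eq_zero_of_kwEnergyRow_eq_zero hB hB0 hF hP hS (hsum.1 a (Finset.mem_univ a))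
  exact ⟨hF₁, hF₂, hP₂, Fin.lastCases (hB0 _ (hP 3 3) hsum.2) hP₁, hS₁, hPS⟩

end SplitForm

section Current

local notation "⟪" X ", " Y "⟫" => trForm _ X Y

variable {n : ℕ}

/-- The pairing `⟪φ_l, D_i φ_j⟫`. -/
noncomputable def pairCovDeriv (A φ : (Fin 4 → ℝ) → Fin 4 → Matrix (Fin n) (Fin n) ℂ)
    (l i j : Fin 4) (x : Fin 4 → ℝ) : ℝ :=
  ⟪φ x l, covDeriv A i (φ · j) x⟫

/-- The pairing `⟪φ_l, F_{ij}⟫`. -/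
noncomputable def pairCurvature (A φ : (Fin 4 → ℝ) → Fin 4 → Matrix (Fin n) (Fin n) ℂ)
    (l i j : Fin 4) (x : Fin 4 → ℝ) : ℝ :=
  ⟪φ x l, curvature A i j x⟫

/-- The cubic expression `⟪φ_l, [φ_i, φ_j]⟫`. -/
noncomputable def pairLie (φ : (Fin 4 → ℝ) → Fin 4 → Matrix (Fin n) (Fin n) ℂ)
    (l i j : Fin 4) (x : Fin 4 → ℝ) : ℝ :=
  ⟪φ x l, ⁅φ x i, φ x j⁆⟫

variable (A φ : (Fin 4 → ℝ) → Fin 4 → Matrix (Fin n) (Fin n) ℂ)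

/-- The component of `kwCurrent` in a boundary direction `i`, where `(i, j, k)` is a cyclic
permutation of the boundary directions `(0, 1, 2)`. -/
noncomputable def kwSideCurrent (i j k : Fin 4) : (Fin 4 → ℝ) → ℝ :=
  pairCovDeriv A φ i j j - pairCovDeriv A φ k k i + pairCovDeriv A φ i 3 3 +
    pairCurvature A φ 3 j k - pairCurvature A φ j 3 k - pairCurvature A φ k j 3 - pairLie φ 3 j k

/-- The component of `kwCurrent` normal to the boundary. -/
noncomputable def kwNormalCurrent : (Fin 4 → ℝ) → ℝ :=
  -∑ a : Fin 3, (pairCovDeriv A φ (sp a) (sp a) 3 +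
    pairCurvature A φ (sp a) (sp (a + 1)) (sp (a + 2)))

/-- The vector field whose divergence, on solutions of the KW equations, is minus the energy
density: it collects the total divergences in the Weitzenböck identity for the sum of the squares
of the equations. -/
noncomputable def kwCurrent : Fin 4 → (Fin 4 → ℝ) → ℝ :=
  ![kwSideCurrent A φ 0 1 2, kwSideCurrent A φ 1 2 0, kwSideCurrent A φ 2 0 1, kwNormalCurrent A φ]

theorem kwCurrent_sp (a : Fin 3) :
    kwCurrent A φ (sp a) = kwSideCurrent A φ (sp a) (sp (a + 1)) (sp (a + 2)) := by
  fin_cases a <;> rfl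

variable {A φ} {x : Fin 4 → ℝ}

theorem differentiableAt_pairCovDeriv (hA : ContDiffAt ℝ 2 A x) (hφ : ContDiffAt ℝ 2 φ x)
    (l i j : Fin 4) : DifferentiableAt ℝ (pairCovDeriv A φ l i j) x :=
  (contDiffAt_trForm ((contDiffAt_pi.1 hφ l).of_le one_le_two)
    (contDiffAt_covDeriv (hA.of_le one_le_two) (contDiffAt_pi.1 hφ j) i)).differentiableAt
    one_ne_zero

theorem differentiableAt_pairCurvature (hA : ContDiffAt ℝ 2 A x) (hφ : ContDiffAt ℝ 2 φ x)
    (l i j : Fin 4) : DifferentiableAt ℝ (pairCurvature A φ l i j) x :=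
  (contDiffAt_trForm ((contDiffAt_pi.1 hφ l).of_le one_le_two)
    (contDiffAt_curvature hA i j)).differentiableAt one_ne_zero

theorem differentiableAt_pairLie (hφ : ContDiffAt ℝ 2 φ x) (l i j : Fin 4) :
    DifferentiableAt ℝ (pairLie φ l i j) x :=
  (contDiffAt_trForm (contDiffAt_pi.1 hφ l)
    (contDiffAt_lie (contDiffAt_pi.1 hφ i) (contDiffAt_pi.1 hφ j))).differentiableAt two_ne_zero

theorem differentiableAt_kwCurrent (hA : ContDiffAt ℝ 2 A x) (hφ : ContDiffAt ℝ 2 φ x)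
    (i : Fin 4) : DifferentiableAt ℝ (kwCurrent A φ i) x := by
  have hcovDeriv := differentiableAt_pairCovDeriv hA hφ
  have hcurvature := differentiableAt_pairCurvature hA hφ
  have hlie := differentiableAt_pairLie hφ
  induction i using Fin.lastCases with
  | last => exact (DifferentiableAt.sum fun a _ => (hcovDeriv _ _ _).add (hcurvature _ _ _)).neg
  | cast a =>
    rw [kwCurrent_sp]
    simp (maxDischargeDepth := 8) only [kwSideCurrent, DifferentiableAt.add,
      DifferentiableAt.sub, hcovDeriv, hcurvature, hlie]

theorem divergence_kwCurrent_eq (hA : ContDiffAt ℝ 2 A x) (hφ : ContDiffAt ℝ 2 φ x) :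
    ∑ i, pd i (kwCurrent A φ i) x =
      pd 0 (pairCovDeriv A φ 0 1 1) x - pd 1 (pairCovDeriv A φ 0 0 1) x +
      (pd 1 (pairCovDeriv A φ 1 2 2) x - pd 2 (pairCovDeriv A φ 1 1 2) x) +
      (pd 2 (pairCovDeriv A φ 2 0 0) x - pd 0 (pairCovDeriv A φ 2 2 0) x) +
      (pd 0 (pairCovDeriv A φ 0 3 3) x - pd 3 (pairCovDeriv A φ 0 0 3) x) +
      (pd 1 (pairCovDeriv A φ 1 3 3) x - pd 3 (pairCovDeriv A φ 1 1 3) x) +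
      (pd 2 (pairCovDeriv A φ 2 3 3) x - pd 3 (pairCovDeriv A φ 2 2 3) x) +
      (pd 0 (pairCurvature A φ 3 1 2) x + pd 1 (pairCurvature A φ 3 2 0) x +
        pd 2 (pairCurvature A φ 3 0 1) x) -
      (pd 1 (pairCurvature A φ 0 2 3) x + pd 2 (pairCurvature A φ 0 3 1) x +
        pd 3 (pairCurvature A φ 0 1 2) x) -
      (pd 2 (pairCurvature A φ 1 0 3) x + pd 0 (pairCurvature A φ 1 3 2) x +
        pd 3 (pairCurvature A φ 1 2 0) x) -
      (pd 0 (pairCurvature A φ 2 1 3) x + pd 1 (pairCurvature A φ 2 3 0) x +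
        pd 3 (pairCurvature A φ 2 0 1) x) -
      (pd 0 (pairLie φ 3 1 2) x + pd 1 (pairLie φ 3 2 0) x + pd 2 (pairLie φ 3 0 1) x) := by
  have hcovDeriv := differentiableAt_pairCovDeriv hA hφ
  have hcurvature := differentiableAt_pairCurvature hA hφ
  have hlie := differentiableAt_pairLie hφ
  simp (maxDischargeDepth := 8) only [Fin.sum_univ_four, kwCurrent, Matrix.cons_val,
    kwSideCurrent, kwNormalCurrent, Fin.sum_univ_three, pd_add, pd_sub, pd_neg,
    DifferentiableAt.add, DifferentiableAt.sub, hcovDeriv, hcurvature, hlie, sp,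
    Fin.castSucc_zero, Fin.reduceAdd, Fin.reduceCastSucc, zero_add]
  ring

theorem divergence_kwCurrent (hA : ContDiffAt ℝ 2 A x) (hφ : ContDiffAt ℝ 2 φ x) :
    ∑ i, pd i (kwCurrent A φ i) x = kwFluxDensity (trForm n) (curvature A · · x)
      (fun i j => covDeriv A i (φ · j) x) (fun i j => ⁅φ x i, φ x j⁆) := by
  have hφdiff := fun l => (contDiffAt_pi.1 hφ l).differentiableAt two_ne_zero
  have hexchange : ∀ i j, pd i (pairCovDeriv A φ i j j) x - pd j (pairCovDeriv A φ i i j) x =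
      ⟪covDeriv A i (φ · i) x, covDeriv A j (φ · j) x⟫ -
        ⟪covDeriv A j (φ · i) x, covDeriv A i (φ · j) x⟫ -
        ⟪curvature A i j x, ⁅φ x i, φ x j⁆⟫ := fun i j =>
    pd_trForm_covDeriv_sub (hA.of_le one_le_two) (hφdiff i) (contDiffAt_pi.1 hφ j) i j
  have hbianchi : ∀ l i j k, pd i (pairCurvature A φ l j k) x + pd j (pairCurvature A φ l k i) x +
      pd k (pairCurvature A φ l i j) x = ⟪covDeriv A i (φ · l) x, curvature A j k x⟫ +
        ⟪covDeriv A j (φ · l) x, curvature A k i x⟫ +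
        ⟪covDeriv A k (φ · l) x, curvature A i j x⟫ := fun l i j k =>
    pd_trForm_curvature_cyclic hA (hφdiff l) i j k
  have hcubic : ∀ i l j k, pd i (pairLie φ l j k) x = ⟪covDeriv A i (φ · l) x, ⁅φ x j, φ x k⁆⟫ +
      ⟪covDeriv A i (φ · j) x, ⁅φ x k, φ x l⁆⟫ +
      ⟪covDeriv A i (φ · k) x, ⁅φ x l, φ x j⁆⟫ := fun i l j k =>
    pd_trForm_lie A (hφdiff l) (hφdiff j) (hφdiff k) i
  have hlieskew : ∀ j, ⁅φ x 3, φ x j⁆ = -⁅φ x j, φ x 3⁆ := fun j => (lie_skew _ _).symm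
  have hFskew : ∀ j, curvature A 3 j x = -curvature A j 3 x := fun j =>
    congrFun (curvature_swap A j 3) x
  have hbianchi₃ := fun l j k => hbianchi l j k 3
  rw [divergence_kwCurrent_eq hA hφ]
  simp only [hFskew, map_neg] at hbianchi₃
  simp only [hcubic, hlieskew, kwFluxDensity, Fin.sum_univ_three, sp, Fin.castSucc_zero,
    Fin.reduceAdd, Fin.reduceCastSucc, zero_add, map_sub, map_neg, LinearMap.sub_apply]
  linear_combination hexchange 0 1 + hexchange 1 2 + hexchange 2 0 + hexchange 0 3 +
    hexchange 1 3 + hexchange 2 3 - hbianchi₃ 0 1 2 - hbianchi₃ 1 2 0 - hbianchi₃ 2 0 1 +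
    hbianchi 3 0 1 2

end Current

section SkewHermitian

open Topology

theorem pd_mem_skewAdjoint {ι E : Type*} [Fintype ι] [DecidableEq ι] [NormedAddCommGroup E]
    [NormedSpace ℝ E] [StarAddMonoid E] [ContinuousStar E] [StarModule ℝ E] {f : (ι → ℝ) → E}
    {x : ι → ℝ} (hf : ∀ᶠ z in 𝓝 x, f z ∈ skewAdjoint E) (i : ι) : pd i f x ∈ skewAdjoint E := by
  have hstar : (fun z => star (f z)) =ᶠ[𝓝 x] -f := hf
  rw [skewAdjoint.mem_iff, ← pd_neg]
  simp only [pd, ← hstar.fderiv_eq, fderiv_star]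
  rfl

theorem lie_mem_skewAdjoint {R : Type*} [Ring R] [StarRing R] {X Y : R} (hX : X ∈ skewAdjoint R)
    (hY : Y ∈ skewAdjoint R) : ⁅X, Y⁆ ∈ skewAdjoint R := by
  rw [skewAdjoint.mem_iff] at *
  rw [Ring.lie_def, star_sub, star_mul, star_mul, hX, hY, neg_mul_neg, neg_mul_neg, neg_sub]

variable {ι : Type*} [Fintype ι] [DecidableEq ι] {n : ℕ}
  {A : (ι → ℝ) → ι → Matrix (Fin n) (Fin n) ℂ} {f : (ι → ℝ) → Matrix (Fin n) (Fin n) ℂ} {x : ι → ℝ}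

theorem covDeriv_mem_skewAdjoint
    (hA : ∀ i, A x i ∈ skewAdjoint (Matrix (Fin n) (Fin n) ℂ))
    (hf : ∀ᶠ z in 𝓝 x, f z ∈ skewAdjoint (Matrix (Fin n) (Fin n) ℂ)) (i : ι) :
    covDeriv A i f x ∈ skewAdjoint (Matrix (Fin n) (Fin n) ℂ) :=
  add_mem (pd_mem_skewAdjoint hf i) (lie_mem_skewAdjoint (hA i) hf.self_of_nhds)

theorem curvature_mem_skewAdjoint
    (hA : ∀ᶠ z in 𝓝 x, ∀ i, A z i ∈ skewAdjoint (Matrix (Fin n) (Fin n) ℂ)) (i j : ι) :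
    curvature A i j x ∈ skewAdjoint (Matrix (Fin n) (Fin n) ℂ) :=
  add_mem (sub_mem (pd_mem_skewAdjoint (hA.mono fun _ h => h j) i)
    (pd_mem_skewAdjoint (hA.mono fun _ h => h i) j))
    (lie_mem_skewAdjoint (hA.self_of_nhds i) (hA.self_of_nhds j))

end SkewHermitian

section Frobenius

local notation "⟪" X ", " Y "⟫" => trForm _ X Y

variable {n : ℕ} {X Y : Matrix (Fin n) (Fin n) ℂ}

theorem frob_eq_frobenius_norm (X : Matrix (Fin n) (Fin n) ℂ) :
    frob X = @norm _ Matrix.frobeniusNormedAddCommGroup.toNorm X := by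
  rw [Matrix.frobenius_norm_def, frob, Real.sqrt_eq_rpow, Matrix.trace, Finset.sum_comm]
  congr 1
  simp [Matrix.mul_apply, Complex.mul_re, ← Complex.normSq_eq_norm_sq, Complex.normSq_apply]

theorem frob_nonneg (X : Matrix (Fin n) (Fin n) ℂ) : 0 ≤ frob X :=
  Real.sqrt_nonneg _

theorem frob_add_le (X Y : Matrix (Fin n) (Fin n) ℂ) : frob (X + Y) ≤ frob X + frob Y := by
  simp only [frob_eq_frobenius_norm]
  let := @Matrix.frobeniusNormedAddCommGroup (Fin n) (Fin n) ℂ _ _ _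
  exact norm_add_le X Y

theorem frob_sub_le (X Y : Matrix (Fin n) (Fin n) ℂ) : frob (X - Y) ≤ frob X + frob Y := by
  simp only [frob_eq_frobenius_norm]
  let := @Matrix.frobeniusNormedAddCommGroup (Fin n) (Fin n) ℂ _ _ _
  exact norm_sub_le X Y

theorem frob_smul (c : ℂ) (X : Matrix (Fin n) (Fin n) ℂ) : frob (c • X) = ‖c‖ * frob X := by
  simp only [frob_eq_frobenius_norm]
  let := @Matrix.frobeniusNormedAddCommGroup (Fin n) (Fin n) ℂ _ _ _
  let := @Matrix.frobeniusNormedSpace ℂ (Fin n) (Fin n) ℂ _ _ _ _ _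
  exact norm_smul c X

theorem frob_lie_le (X Y : Matrix (Fin n) (Fin n) ℂ) : frob ⁅X, Y⁆ ≤ 2 * (frob X * frob Y) := by
  have hmul : ∀ Z W : Matrix (Fin n) (Fin n) ℂ, frob (Z * W) ≤ frob Z * frob W := fun Z W => by
    simpa only [frob_eq_frobenius_norm] using Matrix.frobenius_norm_mul Z W
  rw [Ring.lie_def]
  linarith [frob_sub_le (X * Y) (Y * X), hmul X Y, hmul Y X, mul_comm (frob X) (frob Y)]

theorem frob_eq_zero_iff : frob X = 0 ↔ X = 0 := by
  rw [frob_eq_frobenius_norm]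
  let := @Matrix.frobeniusNormedAddCommGroup (Fin n) (Fin n) ℂ _ _ _
  exact norm_eq_zero

theorem frob_sq (X : Matrix (Fin n) (Fin n) ℂ) :
    frob X ^ 2 = ∑ p : Fin n × Fin n, ‖X p.1 p.2‖ ^ 2 := by
  rw [frob_eq_frobenius_norm, Matrix.frobenius_norm_def, ← Real.sqrt_eq_rpow,
    Real.sq_sqrt (by positivity), Fintype.sum_prod_type]
  simp only [Real.rpow_ofNat]

theorem abs_trForm_le (X Y : Matrix (Fin n) (Fin n) ℂ) : |⟪X, Y⟫| ≤ frob X * frob Y := by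
  have hentries : |⟪X, Y⟫| ≤ ∑ p : Fin n × Fin n, ‖X p.1 p.2‖ * ‖Y p.2 p.1‖ := by
    rw [trForm_apply, abs_neg, Fintype.sum_prod_type]
    refine (Complex.abs_re_le_norm _).trans ?_
    simp only [Matrix.trace, Matrix.diag_apply, Matrix.mul_apply]
    refine (norm_sum_le _ _).trans (Finset.sum_le_sum fun i _ => (norm_sum_le _ _).trans ?_)
    simp only [norm_mul, le_refl]
  have hY : frob Y ^ 2 = ∑ p : Fin n × Fin n, ‖Y p.2 p.1‖ ^ 2 := by
    rw [frob_sq, Fintype.sum_prod_type, Fintype.sum_prod_type, Finset.sum_comm]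
  refine hentries.trans ((Real.sum_mul_le_sqrt_mul_sqrt _ _ _).trans_eq ?_)
  rw [← hY, ← frob_sq, Real.sqrt_sq (frob_nonneg X), Real.sqrt_sq (frob_nonneg Y)]

theorem abs_trForm_le_of_le {a b c : ℝ} (hX : frob X ≤ a) (hY : frob Y ≤ b) (hab : a * b ≤ c) :
    |⟪X, Y⟫| ≤ c :=
  ((abs_trForm_le X Y).trans
    (mul_le_mul hX hY (frob_nonneg Y) ((frob_nonneg X).trans hX))).trans hab

theorem trForm_self_eq_frob_sq (hX : X ∈ skewAdjoint (Matrix (Fin n) (Fin n) ℂ)) :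
    ⟪X, X⟫ = frob X ^ 2 := by
  have hXX : Xᴴ * X = -(X * X) := by
    rw [← Matrix.star_eq_conjTranspose, skewAdjoint.mem_iff.1 hX, neg_mul]
  rw [frob_sq, trForm_apply, ← Complex.neg_re, ← Matrix.trace_neg, ← hXX,
    Matrix.trace, Fintype.sum_prod_type, Finset.sum_comm]
  simp [Matrix.mul_apply, Complex.mul_re, ← Complex.normSq_eq_norm_sq, Complex.normSq_apply]

theorem trForm_self_nonneg (hX : X ∈ skewAdjoint (Matrix (Fin n) (Fin n) ℂ)) : 0 ≤ ⟪X, X⟫ :=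
  (sq_nonneg (frob X)).trans_eq (trForm_self_eq_frob_sq hX).symm

theorem eq_zero_of_trForm_self_eq_zero (hX : X ∈ skewAdjoint (Matrix (Fin n) (Fin n) ℂ))
    (h : ⟪X, X⟫ = 0) : X = 0 :=
  frob_eq_zero_iff.1 (pow_eq_zero_iff two_ne_zero |>.1 (trForm_self_eq_frob_sq hX ▸ h))

end Frobenius

section CovariantlyConstant

open Set Filter Topology

local notation "⟪" X ", " Y "⟫" => trForm _ X Y

variable {d n : ℕ} {A : (Fin (d + 1) → ℝ) → Fin (d + 1) → Matrix (Fin n) (Fin n) ℂ}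
  {f : (Fin (d + 1) → ℝ) → Matrix (Fin n) (Fin n) ℂ} {x : Fin (d + 1) → ℝ}

theorem update_last_mem_halfSpace (x : Fin (d + 1) → ℝ) {s : ℝ} (hs : 0 < s) :
    Function.update x (Fin.last d) s ∈ halfSpace d :=
  hs.trans_eq (Function.update_self (Fin.last d) s x).symm

theorem trForm_self_update_last_eq (hf : DifferentiableOn ℝ f (halfSpace d))
    (hD : ∀ z ∈ halfSpace d, covDeriv A (Fin.last d) f z = 0) (hx : x ∈ halfSpace d) {s : ℝ}
    (hs : 0 < s) :
    ⟪f (Function.update x (Fin.last d) s), f (Function.update x (Fin.last d) s)⟫ =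
      ⟪f x, f x⟫ := by
  have hmem : ∀ r ∈ Ioi (0 : ℝ), Function.update x (Fin.last d) r ∈ halfSpace d := fun r hr =>
    update_last_mem_halfSpace x hr
  have hderiv : ∀ r ∈ Ioi (0 : ℝ), HasDerivAt (fun r => ⟪f (Function.update x (Fin.last d) r),
      f (Function.update x (Fin.last d) r)⟫) 0 r := fun r hr => by
    have hdiff := hf.differentiableAt ((isOpen_halfSpace d).mem_nhds (hmem r hr))
    have h := hasDerivAt_comp_update (f := fun z => ⟪f z, f z⟫)
      ((trFormCLM n).hasFDerivAt_of_bilinear hdiff.hasFDerivAt hdiff.hasFDerivAt).differentiableAt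
      (Fin.last d)
    simpa only [pd_trForm A hdiff hdiff, hD _ (hmem r hr), map_zero, LinearMap.zero_apply, add_zero,
      Function.update_idem, Function.update_self] using h
  simpa only [Function.update_eq_self] using
    isOpen_Ioi.is_const_of_deriv_eq_zero isPreconnected_Ioi
      (fun r hr => (hderiv r hr).differentiableAt.differentiableWithinAt)
      (fun r hr => (hderiv r hr).deriv) hs hx

theorem eq_zero_of_covDeriv_last_eq_zero (hf : DifferentiableOn ℝ f (halfSpace d))
    (hskew : ∀ z ∈ halfSpace d, f z ∈ skewAdjoint (Matrix (Fin n) (Fin n) ℂ))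
    (hD : ∀ z ∈ halfSpace d, covDeriv A (Fin.last d) f z = 0) (hx : x ∈ halfSpace d)
    (hlim : Tendsto (fun s => frob (f (Function.update x (Fin.last d) s))) (𝓝[>] 0) (𝓝 0)) :
    f x = 0 := by
  have hconst : ∀ s ∈ Ioi (0 : ℝ),
      frob (f (Function.update x (Fin.last d) s)) ^ 2 = ⟪f x, f x⟫ := fun s hs => by
    rw [← trForm_self_update_last_eq hf hD hx hs,
      trForm_self_eq_frob_sq (hskew _ (update_last_mem_halfSpace x hs))]
  have hzero : Tendsto (fun _ : ℝ => ⟪f x, f x⟫) (𝓝[>] 0) (𝓝 (0 ^ 2)) :=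
    (hlim.pow 2).congr' (eventually_mem_nhdsWithin.mono hconst)
  exact eq_zero_of_trForm_self_eq_zero (hskew x hx)
    ((tendsto_nhds_unique tendsto_const_nhds hzero).trans (zero_pow two_ne_zero))

end CovariantlyConstant

section Solution

variable {n : ℕ} {A φ : (Fin 4 → ℝ) → Fin 4 → Matrix (Fin n) (Fin n) ℂ} {x : Fin 4 → ℝ}

theorem pd4_eq_pd {f : (Fin 4 → ℝ) → Matrix (Fin n) (Fin n) ℂ} (hf : DifferentiableAt ℝ f x)
    (i : Fin 4) : pd4 i f x = pd i f x :=
  (hasDerivAt_comp_update hf i).deriv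

theorem curv_eq_curvature (hA : DifferentiableAt ℝ A x) (i j : Fin 4) :
    curv A i j x = curvature A i j x := by
  rw [curv, curvature, Ring.lie_def, pd4_eq_pd (differentiableAt_pi.1 hA j),
    pd4_eq_pd (differentiableAt_pi.1 hA i)]

theorem covD_eq_covDeriv (hφ : DifferentiableAt ℝ φ x) (i j : Fin 4) :
    covD A φ i j x = covDeriv A i (φ · j) x := by
  rw [covD, covDeriv, Ring.lie_def, pd4_eq_pd (differentiableAt_pi.1 hφ j)]

/-- A twice continuously differentiable skew-Hermitian solution `(A, φ)` of the KW equations on the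
half-space. -/
structure IsKWSolution (A φ : (Fin 4 → ℝ) → Fin 4 → Matrix (Fin n) (Fin n) ℂ) : Prop where
  contDiffOn_connection : ContDiffOn ℝ 2 A (halfSpace 3)
  contDiffOn_higgs : ContDiffOn ℝ 2 φ (halfSpace 3)
  conjTranspose_connection : ∀ x ∈ halfSpace 3, ∀ i, (A x i)ᴴ = -A x i
  conjTranspose_higgs : ∀ x ∈ halfSpace 3, ∀ i, (φ x i)ᴴ = -φ x i
  equation : ∀ x ∈ halfSpace 3, ∀ i j, curv A i j x - (φ x i * φ x j - φ x j * φ x i) +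
    ∑ k, ∑ l, eps4 i j k l • covD A φ k l x = 0
  divergence : ∀ x ∈ halfSpace 3, ∑ i, covD A φ i i x = 0

/-- The energy density of `(A, φ)`, as a function on the half-space. -/
noncomputable def kwDensity (A φ : (Fin 4 → ℝ) → Fin 4 → Matrix (Fin n) (Fin n) ℂ)
    (x : Fin 4 → ℝ) : ℝ :=
  kwEnergy (trForm n) (curvature A · · x) (fun i j => covDeriv A i (φ · j) x)
    (fun i j => ⁅φ x i, φ x j⁆)

namespace IsKWSolution

theorem contDiffAt_connection (h : IsKWSolution A φ) (hx : x ∈ halfSpace 3) :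
    ContDiffAt ℝ 2 A x :=
  h.contDiffOn_connection.contDiffAt ((isOpen_halfSpace 3).mem_nhds hx)

theorem contDiffAt_higgs (h : IsKWSolution A φ) (hx : x ∈ halfSpace 3) : ContDiffAt ℝ 2 φ x :=
  h.contDiffOn_higgs.contDiffAt ((isOpen_halfSpace 3).mem_nhds hx)

theorem curv_eq (h : IsKWSolution A φ) (hx : x ∈ halfSpace 3) (i j : Fin 4) :
    curv A i j x = curvature A i j x :=
  curv_eq_curvature ((h.contDiffAt_connection hx).differentiableAt two_ne_zero) i j

theorem covD_eq (h : IsKWSolution A φ) (hx : x ∈ halfSpace 3) (i j : Fin 4) :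
    covD A φ i j x = covDeriv A i (φ · j) x :=
  covD_eq_covDeriv ((h.contDiffAt_higgs hx).differentiableAt two_ne_zero) i j

theorem kwSplit (h : IsKWSolution A φ) (hx : x ∈ halfSpace 3) :
    KWSplit (curvature A · · x) (fun i j => covDeriv A i (φ · j) x)
      (fun i j => ⁅φ x i, φ x j⁆) :=
  .of_eps4 (by simpa only [h.curv_eq hx, h.covD_eq hx, Ring.lie_def] using h.equation x hx)
    (by simpa only [h.covD_eq hx] using h.divergence x hx)

theorem higgs_mem_skewAdjoint (h : IsKWSolution A φ) (hx : x ∈ halfSpace 3) (i : Fin 4) :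
    φ x i ∈ skewAdjoint (Matrix (Fin n) (Fin n) ℂ) :=
  h.conjTranspose_higgs x hx i

theorem curvature_mem_skewAdjoint (h : IsKWSolution A φ) (hx : x ∈ halfSpace 3) (i j : Fin 4) :
    curvature A i j x ∈ skewAdjoint (Matrix (Fin n) (Fin n) ℂ) :=
  _root_.curvature_mem_skewAdjoint
    (((isOpen_halfSpace 3).eventually_mem hx).mono h.conjTranspose_connection) i j

theorem covDeriv_mem_skewAdjoint (h : IsKWSolution A φ) (hx : x ∈ halfSpace 3) (i j : Fin 4) :
    covDeriv A i (φ · j) x ∈ skewAdjoint (Matrix (Fin n) (Fin n) ℂ) :=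
  _root_.covDeriv_mem_skewAdjoint (h.conjTranspose_connection x hx)
    (((isOpen_halfSpace 3).eventually_mem hx).mono fun _ hz => h.higgs_mem_skewAdjoint hz j) i

theorem lie_mem_skewAdjoint (h : IsKWSolution A φ) (hx : x ∈ halfSpace 3) (i j : Fin 4) :
    ⁅φ x i, φ x j⁆ ∈ skewAdjoint (Matrix (Fin n) (Fin n) ℂ) :=
  _root_.lie_mem_skewAdjoint (h.higgs_mem_skewAdjoint hx i) (h.higgs_mem_skewAdjoint hx j)

theorem kwDensity_nonneg (h : IsKWSolution A φ) (hx : x ∈ halfSpace 3) : 0 ≤ kwDensity A φ x :=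
  kwEnergy_nonneg (N := skewAdjoint _) (fun _ => trForm_self_nonneg)
    (h.curvature_mem_skewAdjoint hx) (h.covDeriv_mem_skewAdjoint hx) (h.lie_mem_skewAdjoint hx)

theorem isFlatNahm_of_kwDensity_eq_zero (h : IsKWSolution A φ) (hx : x ∈ halfSpace 3)
    (h0 : kwDensity A φ x = 0) :
    IsFlatNahm (curvature A · · x) (fun i j => covDeriv A i (φ · j) x)
      (fun i j => ⁅φ x i, φ x j⁆) :=
  .of_kwEnergy_eq_zero (N := skewAdjoint _) (fun _ => trForm_self_nonneg)
    (fun _ => eq_zero_of_trForm_self_eq_zero) (h.curvature_mem_skewAdjoint hx)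
    (h.covDeriv_mem_skewAdjoint hx) (h.lie_mem_skewAdjoint hx) h0

theorem divergence_kwCurrent (h : IsKWSolution A φ) (hx : x ∈ halfSpace 3) :
    ∑ i, pd i (kwCurrent A φ i) x = -kwDensity A φ x := by
  rw [_root_.divergence_kwCurrent (h.contDiffAt_connection hx) (h.contDiffAt_higgs hx),
    (h.kwSplit hx).kwFluxDensity_eq trForm_comm, kwDensity]

theorem continuousOn_kwDensity (h : IsKWSolution A φ) :
    ContinuousOn (kwDensity A φ) (halfSpace 3) := fun x hx => by
  have hA := h.contDiffAt_connection hx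
  have hφ := contDiffAt_pi.1 (h.contDiffAt_higgs hx)
  have hself : ∀ {f : (Fin 4 → ℝ) → Matrix (Fin n) (Fin n) ℂ}, ContDiffAt ℝ 1 f x →
      ContinuousAt (fun z => trForm n (f z) (f z)) x :=
    fun hf => (contDiffAt_trForm hf hf).continuousAt
  have hF := contDiffAt_curvature hA
  have hP := fun i j => contDiffAt_covDeriv (hA.of_le one_le_two) (hφ j) i
  have hS := fun i j => (contDiffAt_lie (hφ i) (hφ j)).of_le one_le_two
  refine ContinuousAt.continuousWithinAt (ContinuousAt.div_const (.add ?_ (hself (hP 3 3))) 2)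
  exact tendsto_finsetSum _ fun a _ => (((((hself (hF _ _)).add (hself (hF _ _))).add
    (hself (hP _ _))).add (hself ((hP _ _).add (hS _ _)))).add (hself (hS _ _))).add
    (tendsto_finsetSum _ fun b _ => hself (hP _ _))

end IsKWSolution

end Solution

section Decay

theorem abs_apply_le_nrm (x : Fin 4 → ℝ) (i : Fin 4) : |x i| ≤ nrm x := by
  rw [nrm, ← Real.sqrt_sq_eq_abs]
  exact Real.sqrt_le_sqrt
    (Finset.single_le_sum (f := fun j => x j ^ 2) (fun j _ => sq_nonneg (x j)) (Finset.mem_univ i))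

theorem apply_three_le_nrm (x : Fin 4 → ℝ) : x 3 ≤ nrm x :=
  (le_abs_self _).trans (abs_apply_le_nrm x 3)

theorem min_le_rpow_mul_rpow {a b θ : ℝ} (ha : 0 < a) (hb : 0 < b) (h0 : 0 ≤ θ) (h1 : θ ≤ 1) :
    min a b ≤ a ^ θ * b ^ (1 - θ) := by
  have hmin : 0 < min a b := lt_min ha hb
  calc min a b = min a b ^ θ * min a b ^ (1 - θ) := by
        rw [← Real.rpow_add hmin, add_sub_cancel, Real.rpow_one]
    _ ≤ a ^ θ * b ^ (1 - θ) := by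
        gcongr
        · exact min_le_left _ _
        · exact min_le_right _ _

theorem min_rpow_le_rpow_neg {y r p k q : ℝ} (hy : 0 < y) (hr : y ≤ r) (hp : 0 ≤ p) (hk : 0 ≤ k)
    (hkq : k ≤ q) : min (y ^ p) (r ^ (-q)) ≤ y ^ (-k) := by
  rcases le_total y 1 with h | h
  · exact (min_le_left _ _).trans ((Real.rpow_le_one hy.le h hp).trans
      (Real.one_le_rpow_of_pos_of_le_one_of_nonpos hy h (neg_nonpos.2 hk)))
  · exact (min_le_right _ _).trans ((Real.rpow_le_rpow_of_nonpos hy hr (by linarith)).trans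
      (Real.rpow_le_rpow_of_exponent_le h (by linarith)))

/-- The weight `min (y ^ δ, r ^ (-2 - δ))` which bounds the first derivatives of the fields. -/
noncomputable def decayWeight (δ : ℝ) (x : Fin 4 → ℝ) : ℝ :=
  min (x 3 ^ δ) (nrm x ^ (-(2 + δ)))

variable {δ : ℝ} {x : Fin 4 → ℝ}

theorem nrm_pos (hx : x ∈ halfSpace 3) : 0 < nrm x :=
  lt_of_lt_of_le hx (apply_three_le_nrm x)

theorem decayWeight_pos (δ : ℝ) (hx : x ∈ halfSpace 3) : 0 < decayWeight δ x :=
  lt_min (Real.rpow_pos_of_pos hx δ) (Real.rpow_pos_of_pos (nrm_pos hx) _)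

theorem decayWeight_le_rpow_neg_two (hδ : 0 < δ) (hx : x ∈ halfSpace 3) :
    decayWeight δ x ≤ x 3 ^ (-2 : ℝ) :=
  min_rpow_le_rpow_neg hx (apply_three_le_nrm x) hδ.le zero_le_two (by linarith)

theorem min_rpow_one_add_le_decayWeight (hδ : 0 < δ) (hx : x ∈ halfSpace 3) :
    min (x 3 ^ (1 + δ)) (nrm x ^ (-(2 + δ))) ≤ decayWeight δ x := by
  refine le_min ?_ (min_le_right _ _)
  rcases le_total (x 3) 1 with h | h
  · exact (min_le_left _ _).trans (Real.rpow_le_rpow_of_exponent_ge hx h (by linarith))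
  · exact (min_le_right _ _).trans ((Real.rpow_le_one_of_one_le_of_nonpos
      (h.trans (apply_three_le_nrm x)) (by linarith)).trans (Real.one_le_rpow h hδ.le))

theorem rpow_mul_one_add_nrm_rpow_le (hδ : 0 < δ) (hx : x ∈ halfSpace 3) :
    x 3 ^ (1 + δ) * (1 + nrm x) ^ (-(3 + 2 * δ)) ≤ x 3 * decayWeight δ x := by
  have hy : 0 < x 3 := hx
  have hr := nrm_pos hx
  have hyr := apply_three_le_nrm x
  have h1r : 1 ≤ 1 + nrm x := le_add_of_nonneg_right hr.le
  rw [Real.rpow_add hy, Real.rpow_one, mul_assoc]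
  refine mul_le_mul_of_nonneg_left (le_min ?_ ?_) hy.le
  · exact mul_le_of_le_one_right (Real.rpow_nonneg hy.le _)
      (Real.rpow_le_one_of_one_le_of_nonpos h1r (by linarith))
  · calc x 3 ^ δ * (1 + nrm x) ^ (-(3 + 2 * δ))
        ≤ (1 + nrm x) ^ δ * (1 + nrm x) ^ (-(3 + 2 * δ)) := by
          gcongr
          linarith
      _ = (1 + nrm x) ^ (-(3 + δ)) := by
          rw [← Real.rpow_add (by linarith)]
          congr 1
          ring
      _ ≤ (1 + nrm x) ^ (-(2 + δ)) := Real.rpow_le_rpow_of_exponent_le h1r (by linarith)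
      _ ≤ nrm x ^ (-(2 + δ)) := Real.rpow_le_rpow_of_nonpos hr (by linarith) (by linarith)

/-- Interpolating between the two terms of the minimum distributes the decay over `y` and the
boundary coordinates. -/
theorem decayWeight_div_le (hδ : 0 < δ) {θ : ℝ} (hθ0 : 0 ≤ θ) (hθ1 : θ ≤ 1)
    (hx : x ∈ halfSpace 3) {a : Fin 3} (ha : x (sp a) ≠ 0) :
    decayWeight δ x / x 3 ≤ |x (sp a)| ^ (-((2 + δ) * (1 - θ))) * x 3 ^ (δ * θ - 1) := by
  have hy : 0 < x 3 := hx
  have hr := nrm_pos hx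
  calc decayWeight δ x / x 3
      ≤ (x 3 ^ δ) ^ θ * (nrm x ^ (-(2 + δ))) ^ (1 - θ) / x 3 := by
        gcongr
        exact min_le_rpow_mul_rpow (Real.rpow_pos_of_pos hy δ) (Real.rpow_pos_of_pos hr _) hθ0 hθ1
    _ = nrm x ^ (-((2 + δ) * (1 - θ))) * x 3 ^ (δ * θ - 1) := by
        rw [← Real.rpow_mul hy.le, ← Real.rpow_mul hr.le, neg_mul, Real.rpow_sub_one hy.ne']
        ring
    _ ≤ |x (sp a)| ^ (-((2 + δ) * (1 - θ))) * x 3 ^ (δ * θ - 1) := by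
        have hexp : 0 ≤ (2 + δ) * (1 - θ) := mul_nonneg (by linarith) (by linarith)
        exact mul_le_mul_of_nonneg_right (Real.rpow_le_rpow_of_nonpos (abs_pos.2 ha)
          (abs_apply_le_nrm x _) (neg_nonpos.2 hexp)) (Real.rpow_nonneg hy.le _)

variable {n : ℕ} {A φ : (Fin 4 → ℝ) → Fin 4 → Matrix (Fin n) (Fin n) ℂ} {M C : ℝ}

/-- The part of the Nahm pole boundary conditions, with exponent `δ` and constants `M` and `C`, that
forces uniqueness: of the pole itself only the size `|φ_a| ≤ M / y` is retained. -/
structure HasNahmPoleDecay (A φ : (Fin 4 → ℝ) → Fin 4 → Matrix (Fin n) (Fin n) ℂ) (M C δ : ℝ) :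
    Prop where
  higgs : ∀ x ∈ halfSpace 3, ∀ a : Fin 3, frob (φ x (sp a)) ≤ M / x 3
  higgs_normal : ∀ x ∈ halfSpace 3,
    frob (φ x 3) ≤ C * x 3 ^ (1 + δ) * (1 + nrm x) ^ (-(3 + 2 * δ))
  curv : ∀ x ∈ halfSpace 3, ∀ a b : Fin 3,
    frob (curv A (sp a) (sp b) x) ≤ C * min (x 3 ^ (1 + δ)) (nrm x ^ (-(2 + δ)))
  covD_tangential : ∀ x ∈ halfSpace 3, ∀ a b : Fin 3,
    frob (covD A φ (sp a) (sp b) x) ≤ C * min (x 3 ^ δ) (nrm x ^ (-(2 + δ)))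
  covD_higgs_normal : ∀ x ∈ halfSpace 3, ∀ a : Fin 3,
    frob (covD A φ (sp a) 3 x) ≤ C * min (x 3 ^ (1 + δ)) (nrm x ^ (-(2 + δ)))
  covD_normal_normal : ∀ x ∈ halfSpace 3,
    frob (covD A φ 3 3 x) ≤ C * min (x 3 ^ δ) (nrm x ^ (-(2 + δ)))

namespace HasNahmPoleDecay

theorem higgs_const_nonneg (h : HasNahmPoleDecay A φ M C δ) (hx : x ∈ halfSpace 3) : 0 ≤ M := by
  simpa only [zero_mul] using (le_div_iff₀ hx).1 ((frob_nonneg _).trans (h.higgs x hx 0))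

theorem const_nonneg (h : HasNahmPoleDecay A φ M C δ) (hx : x ∈ halfSpace 3) : 0 ≤ C :=
  nonneg_of_mul_nonneg_left ((frob_nonneg _).trans (h.covD_normal_normal x hx))
    (decayWeight_pos δ hx)

theorem frob_higgs_normal_le (h : HasNahmPoleDecay A φ M C δ) (hδ : 0 < δ)
    (hx : x ∈ halfSpace 3) : frob (φ x 3) ≤ C * (x 3 * decayWeight δ x) := by
  refine (h.higgs_normal x hx).trans ?_
  rw [mul_assoc]
  exact mul_le_mul_of_nonneg_left (rpow_mul_one_add_nrm_rpow_le hδ hx) (h.const_nonneg hx)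

theorem frob_higgs_normal_le_rpow (h : HasNahmPoleDecay A φ M C δ) (hδ : 0 < δ)
    (hx : x ∈ halfSpace 3) : frob (φ x 3) ≤ C * x 3 ^ (1 + δ) :=
  (h.higgs_normal x hx).trans (mul_le_of_le_one_right
    (mul_nonneg (h.const_nonneg hx) (Real.rpow_nonneg (le_of_lt hx) _))
    (Real.rpow_le_one_of_one_le_of_nonpos (le_add_of_nonneg_right (nrm_pos hx).le) (by linarith)))

theorem frob_lie_tangential_le (h : HasNahmPoleDecay A φ M C δ) (hx : x ∈ halfSpace 3)
    (a b : Fin 3) : frob ⁅φ x (sp a), φ x (sp b)⁆ ≤ 2 * (M / x 3 * (M / x 3)) := by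
  have hM := (frob_nonneg _).trans (h.higgs x hx a)
  exact (frob_lie_le _ _).trans (mul_le_mul_of_nonneg_left
    (mul_le_mul (h.higgs x hx a) (h.higgs x hx b) (frob_nonneg _) hM) zero_le_two)

theorem frob_lie_normal_le (h : HasNahmPoleDecay A φ M C δ) (hδ : 0 < δ) (hx : x ∈ halfSpace 3)
    (a : Fin 3) : frob ⁅φ x (sp a), φ x 3⁆ ≤ 2 * (M * C * decayWeight δ x) := by
  have hy : 0 < x 3 := hx
  refine (frob_lie_le _ _).trans (mul_le_mul_of_nonneg_left ?_ zero_le_two)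
  calc frob (φ x (sp a)) * frob (φ x 3) ≤ M / x 3 * (C * (x 3 * decayWeight δ x)) :=
        mul_le_mul (h.higgs x hx a) (h.frob_higgs_normal_le hδ hx) (frob_nonneg _)
          ((frob_nonneg _).trans (h.higgs x hx a))
    _ = M * C * decayWeight δ x := by field_simp

theorem frob_curvature_tangential_le (h : HasNahmPoleDecay A φ M C δ) (hsol : IsKWSolution A φ)
    (hδ : 0 < δ) (hx : x ∈ halfSpace 3) (a b : Fin 3) :
    frob (curvature A (sp a) (sp b) x) ≤ C * decayWeight δ x := by
  rw [← hsol.curv_eq hx]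
  exact (h.curv x hx a b).trans
    (mul_le_mul_of_nonneg_left (min_rpow_one_add_le_decayWeight hδ hx) (h.const_nonneg hx))

theorem frob_covDeriv_tangential_le (h : HasNahmPoleDecay A φ M C δ) (hsol : IsKWSolution A φ)
    (hx : x ∈ halfSpace 3) (a b : Fin 3) :
    frob (covDeriv A (sp a) (φ · (sp b)) x) ≤ C * decayWeight δ x := by
  rw [← hsol.covD_eq hx]
  exact h.covD_tangential x hx a b

/-- The KW equations express the normal curvature through terms with a decay bound. -/
theorem frob_curvature_normal_le (h : HasNahmPoleDecay A φ M C δ) (hsol : IsKWSolution A φ)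
    (hδ : 0 < δ) (hx : x ∈ halfSpace 3) (a : Fin 3) :
    frob (curvature A (sp a) 3 x) ≤ 2 * (C * (1 + M) * decayWeight δ x) := by
  have hP := h.frob_covDeriv_tangential_le hsol hx
  have hF := (hsol.kwSplit hx).normal a
  rw [sub_add, sub_eq_zero] at hF
  rw [hF]
  linarith [frob_sub_le ⁅φ x (sp a), φ x 3⁆ (covDeriv A (sp (a + 1)) (φ · (sp (a + 2))) x -
      covDeriv A (sp (a + 2)) (φ · (sp (a + 1))) x),
    frob_sub_le (covDeriv A (sp (a + 1)) (φ · (sp (a + 2))) x)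
      (covDeriv A (sp (a + 2)) (φ · (sp (a + 1))) x),
    h.frob_lie_normal_le hδ hx a, hP (a + 1) (a + 2), hP (a + 2) (a + 1)]

theorem abs_pairCovDeriv_le (h : HasNahmPoleDecay A φ M C δ) (hsol : IsKWSolution A φ)
    (hx : x ∈ halfSpace 3) (a b c : Fin 3) :
    |pairCovDeriv A φ (sp a) (sp b) (sp c) x| ≤ M * C * (decayWeight δ x / x 3) :=
  abs_trForm_le_of_le (h.higgs x hx a) (h.frob_covDeriv_tangential_le hsol hx b c)
    (le_of_eq (by ring))

theorem abs_pairCovDeriv_normal_normal_le (h : HasNahmPoleDecay A φ M C δ)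
    (hsol : IsKWSolution A φ) (hx : x ∈ halfSpace 3) (a : Fin 3) :
    |pairCovDeriv A φ (sp a) 3 3 x| ≤ M * C * (decayWeight δ x / x 3) :=
  abs_trForm_le_of_le (h.higgs x hx a)
    ((hsol.covD_eq hx 3 3 ▸ h.covD_normal_normal x hx : _ ≤ C * decayWeight δ x))
    (le_of_eq (by ring))

theorem abs_pairCurvature_normal_le (h : HasNahmPoleDecay A φ M C δ) (hsol : IsKWSolution A φ)
    (hδ : 0 < δ) (hx : x ∈ halfSpace 3) (a b : Fin 3) :
    |pairCurvature A φ (sp a) (sp b) 3 x| ≤ 2 * (M * C * (1 + M) * (decayWeight δ x / x 3)) :=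
  abs_trForm_le_of_le (h.higgs x hx a) (h.frob_curvature_normal_le hsol hδ hx b)
    (le_of_eq (by ring))

theorem abs_pairCurvature_higgs_normal_le (h : HasNahmPoleDecay A φ M C δ)
    (hsol : IsKWSolution A φ) (hδ : 0 < δ) (hx : x ∈ halfSpace 3) (a b : Fin 3) :
    |pairCurvature A φ 3 (sp a) (sp b) x| ≤ C ^ 2 * (decayWeight δ x / x 3) := by
  have hy : 0 < x 3 := hx
  have hw := (decayWeight_pos δ hx).le
  refine abs_trForm_le_of_le (h.frob_higgs_normal_le hδ hx)
    (h.frob_curvature_tangential_le hsol hδ hx a b) ?_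
  calc C * (x 3 * decayWeight δ x) * (C * decayWeight δ x)
      = C ^ 2 * (x 3 * decayWeight δ x * decayWeight δ x) := by ring
    _ ≤ C ^ 2 * (x 3 * decayWeight δ x * x 3 ^ (-2 : ℝ)) := by
        gcongr
        exact decayWeight_le_rpow_neg_two hδ hx
    _ = C ^ 2 * (decayWeight δ x / x 3) := by
        rw [Real.rpow_neg hy.le, Real.rpow_ofNat]
        field_simp

theorem abs_pairLie_higgs_normal_le (h : HasNahmPoleDecay A φ M C δ) (hδ : 0 < δ)
    (hx : x ∈ halfSpace 3) (a b : Fin 3) :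
    |pairLie φ 3 (sp a) (sp b) x| ≤ 2 * (C * M ^ 2 * (decayWeight δ x / x 3)) := by
  have hy : 0 < x 3 := hx
  refine abs_trForm_le_of_le (h.frob_higgs_normal_le hδ hx) (h.frob_lie_tangential_le hx a b)
    (le_of_eq ?_)
  field_simp

theorem abs_kwCurrent_sp_le (h : HasNahmPoleDecay A φ M C δ) (hsol : IsKWSolution A φ)
    (hδ : 0 < δ) (hx : x ∈ halfSpace 3) (a : Fin 3) :
    |kwCurrent A φ (sp a) x| ≤ C * (C + 7 * M + 6 * M ^ 2) * (decayWeight δ x / x 3) := by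
  have hswap : ∀ l b : Fin 3,
      pairCurvature A φ (sp l) 3 (sp b) x = -pairCurvature A φ (sp l) (sp b) 3 x := fun l b => by
    simp only [pairCurvature, curvature_swap A (sp b) 3, Pi.neg_apply, map_neg]
  have hP := fun b c d => abs_le.1 (h.abs_pairCovDeriv_le hsol hx b c d)
  have hP₃ := abs_le.1 (h.abs_pairCovDeriv_normal_normal_le hsol hx a)
  have hF := fun b c => abs_le.1 (h.abs_pairCurvature_normal_le hsol hδ hx b c)
  have hF₃ := abs_le.1 (h.abs_pairCurvature_higgs_normal_le hsol hδ hx (a + 1) (a + 2))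
  have hS := abs_le.1 (h.abs_pairLie_higgs_normal_le hδ hx (a + 1) (a + 2))
  rw [kwCurrent_sp, kwSideCurrent]
  simp only [Pi.add_apply, Pi.sub_apply, hswap]
  rw [abs_le]
  constructor <;>
    linarith [hP a (a + 1) (a + 1), hP (a + 2) (a + 2) a, hF (a + 1) (a + 2), hF (a + 2) (a + 1)]

theorem abs_kwCurrent_last_le (h : HasNahmPoleDecay A φ M C δ) (hsol : IsKWSolution A φ)
    (hx : x ∈ halfSpace 3) :
    |kwCurrent A φ (Fin.last 3) x| ≤
      6 * M * C * (min (x 3 ^ (1 + δ)) (nrm x ^ (-(2 + δ))) / x 3) := by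
  set w := min (x 3 ^ (1 + δ)) (nrm x ^ (-(2 + δ)))
  have hP : ∀ a, |pairCovDeriv A φ (sp a) (sp a) 3 x| ≤ M * C * (w / x 3) := fun a =>
    abs_trForm_le_of_le (h.higgs x hx a)
      (hsol.covD_eq hx (sp a) 3 ▸ h.covD_higgs_normal x hx a) (le_of_eq (by ring))
  have hF : ∀ a b c, |pairCurvature A φ (sp a) (sp b) (sp c) x| ≤ M * C * (w / x 3) :=
    fun a b c => abs_trForm_le_of_le (h.higgs x hx a)
      (hsol.curv_eq hx (sp b) (sp c) ▸ h.curv x hx b c) (le_of_eq (by ring))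
  have hcurrent : kwCurrent A φ (Fin.last 3) x = -∑ a : Fin 3, (pairCovDeriv A φ (sp a) (sp a) 3 x +
      pairCurvature A φ (sp a) (sp (a + 1)) (sp (a + 2)) x) := by
    change kwNormalCurrent A φ x = _
    simp only [kwNormalCurrent, Pi.neg_apply, Finset.sum_apply, Pi.add_apply]
  rw [hcurrent, abs_neg]
  calc _ ≤ ∑ _a : Fin 3, (M * C * (w / x 3) + M * C * (w / x 3)) :=
        (Finset.abs_sum_le_sum_abs _ _).trans (Finset.sum_le_sum fun a _ =>
          (abs_add_le _ _).trans (add_le_add (hP a) (hF a _ _)))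
    _ = 6 * M * C * (w / x 3) := by
        rw [Fin.sum_const, nsmul_eq_mul]
        push_cast
        ring

theorem abs_kwCurrent_last_le_rpow (h : HasNahmPoleDecay A φ M C δ) (hsol : IsKWSolution A φ)
    (hx : x ∈ halfSpace 3) {e : ℝ}
    (he : min (x 3 ^ (1 + δ)) (nrm x ^ (-(2 + δ))) ≤ x 3 ^ (e + 1)) :
    |kwCurrent A φ (Fin.last 3) x| ≤ C * (C + 7 * M + 6 * M ^ 2) * x 3 ^ e := by
  have hy : 0 < x 3 := hx
  have hM := h.higgs_const_nonneg hx
  have hC := h.const_nonneg hx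
  refine (h.abs_kwCurrent_last_le hsol hx).trans ?_
  rw [← mul_div_assoc, div_le_iff₀ hx, mul_assoc _ (x 3 ^ e), ← Real.rpow_add_one hy.ne']
  refine mul_le_mul ?_ he (le_min (Real.rpow_nonneg hy.le _)
    (Real.rpow_nonneg (nrm_pos hx).le _)) (by positivity)
  rw [mul_comm _ C]
  exact mul_le_mul_of_nonneg_left (by nlinarith) hC

/-- Small `θ > 0` gives both integrability at the boundary and enough decay along it. -/
theorem hasFluxDecay (h : HasNahmPoleDecay A φ M C δ) (hsol : IsKWSolution A φ) (hδ : 0 < δ)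
    {θ : ℝ} (hθ0 : 0 ≤ θ) (hθ1 : θ ≤ 1) :
    HasFluxDecay (kwCurrent A φ) (C * (C + 7 * M + 6 * M ^ 2)) (δ * θ) ((2 + δ) * (1 - θ)) δ
      (3 + δ) where
  lateral x hx a ha := by
    have hM := h.higgs_const_nonneg hx
    have hC := h.const_nonneg hx
    rw [mul_assoc]
    exact (h.abs_kwCurrent_sp_le hsol hδ hx a).trans
      (mul_le_mul_of_nonneg_left (decayWeight_div_le hδ hθ0 hθ1 hx ha) (by positivity))
  bottom x hx := h.abs_kwCurrent_last_le_rpow hsol hx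
    ((min_le_left _ _).trans_eq (by rw [add_comm 1 δ]))
  top x hx := h.abs_kwCurrent_last_le_rpow hsol hx
    ((min_rpow_le_rpow_neg hx (apply_three_le_nrm x) (by linarith) (by linarith) le_rfl).trans_eq
      (congrArg (x 3 ^ ·) (by ring)))

end HasNahmPoleDecay

end Decay

section Uniqueness

open Filter Topology

variable {n : ℕ} {A φ : (Fin 4 → ℝ) → Fin 4 → Matrix (Fin n) (Fin n) ℂ} {M C δ : ℝ}
  {x : Fin 4 → ℝ}

theorem half_smul_sum_eps3_smul_lie (X : Fin 3 → Matrix (Fin n) (Fin n) ℂ) (a : Fin 3) :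
    (1 / 2 : ℂ) • ∑ b, ∑ c, eps3 a b c • ⁅X b, X c⁆ = ⁅X (a + 1), X (a + 2)⁆ := by
  obtain rfl | rfl | rfl : a = 0 ∨ a = 1 ∨ a = 2 := by omega
  all_goals
    simp only [Ring.lie_def, Fin.sum_univ_three, eps3, Fin.reduceAdd]
    norm_num
    module

theorem frob_le_div_of_frob_sub_le (t : Fin 3 → Matrix (Fin n) (Fin n) ℂ) (hC : 0 ≤ C)
    (hδ : 0 ≤ δ) (hx : x ∈ halfSpace 3) {a : Fin 3}
    (h : frob (φ x (sp a) - ((x 3 : ℂ))⁻¹ • t a) ≤ C * min (x 3 ^ δ) (nrm x ^ (-(1 + δ)))) :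
    frob (φ x (sp a)) ≤ (C + ∑ b, frob (t b)) / x 3 := by
  have hy : 0 < x 3 := hx
  have hpole : frob ((x 3 : ℂ)⁻¹ • t a) = (x 3)⁻¹ * frob (t a) := by
    rw [frob_smul, norm_inv, Complex.norm_real, Real.norm_of_nonneg hy.le]
  have hmin : min (x 3 ^ δ) (nrm x ^ (-(1 + δ))) ≤ (x 3)⁻¹ := by
    rw [← Real.rpow_neg_one]
    exact min_rpow_le_rpow_neg hy (apply_three_le_nrm x) hδ zero_le_one (by linarith)
  calc frob (φ x (sp a))
      = frob (φ x (sp a) - (x 3 : ℂ)⁻¹ • t a + (x 3 : ℂ)⁻¹ • t a) := by rw [sub_add_cancel]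
    _ ≤ C * (x 3)⁻¹ + (x 3)⁻¹ * ∑ b, frob (t b) := by
        refine (frob_add_le _ _).trans (add_le_add (h.trans (by gcongr)) ?_)
        rw [hpole]
        gcongr
        exact Finset.single_le_sum (fun b _ => frob_nonneg (t b)) (Finset.mem_univ a)
    _ = (C + ∑ b, frob (t b)) / x 3 := by ring

namespace IsKWSolution

theorem kwDensity_eq_zero (hsol : IsKWSolution A φ) (hdecay : HasNahmPoleDecay A φ M C δ)
    (hδ : 0 < δ) (hx : x ∈ halfSpace 3) : kwDensity A φ x = 0 := by
  have hM := hdecay.higgs_const_nonneg hx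
  have hC := hdecay.const_nonneg hx
  have hθ : 0 < δ / (4 * (1 + δ)) := by positivity
  have hθδ : (1 + δ) * (δ / (4 * (1 + δ))) = δ / 4 := by field_simp
  refine (hdecay.hasFluxDecay hsol hδ hθ.le (by nlinarith)).density_eq_zero (mul_pos hδ hθ) ?_ hδ
    ?_ (by positivity) ?_ hsol.continuousOn_kwDensity (fun _ hz => hsol.kwDensity_nonneg hz)
    (fun _ hz => hsol.divergence_kwCurrent hz) hx
  · norm_num
    linarith
  · norm_num
    exact hδ
  · exact fun i z hz => (differentiableAt_kwCurrent (hsol.contDiffAt_connection hz)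
      (hsol.contDiffAt_higgs hz) i).differentiableWithinAt

theorem isFlatNahm (hsol : IsKWSolution A φ) (hdecay : HasNahmPoleDecay A φ M C δ)
    (hδ : 0 < δ) (hx : x ∈ halfSpace 3) :
    IsFlatNahm (curvature A · · x) (fun i j => covDeriv A i (φ · j) x)
      (fun i j => ⁅φ x i, φ x j⁆) :=
  hsol.isFlatNahm_of_kwDensity_eq_zero hx (hsol.kwDensity_eq_zero hdecay hδ hx)

theorem higgs_normal_eq_zero (hsol : IsKWSolution A φ) (hdecay : HasNahmPoleDecay A φ M C δ)
    (hδ : 0 < δ) (hx : x ∈ halfSpace 3) : φ x 3 = 0 := by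
  refine eq_zero_of_covDeriv_last_eq_zero (A := A) (f := (φ · 3))
    (differentiableOn_pi.1 (hsol.contDiffOn_higgs.differentiableOn two_ne_zero) 3)
    (fun z hz => hsol.higgs_mem_skewAdjoint hz 3)
    (fun z hz => (hsol.isFlatNahm hdecay hδ hz).covDeriv_normal 3) hx ?_
  have hlim : Tendsto (fun s : ℝ => C * s ^ (1 + δ)) (𝓝[>] 0) (𝓝 0) := by
    have hp : 0 < 1 + δ := by linarith
    simpa only [Real.zero_rpow hp.ne', mul_zero] using
      (((Real.continuousAt_rpow_const 0 _ (.inr hp.le)).tendsto.const_mul C).mono_left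
        nhdsWithin_le_nhds)
  refine squeeze_zero' (.of_forall fun s => frob_nonneg _) ?_ hlim
  filter_upwards [self_mem_nhdsWithin] with s hs
  exact (hdecay.frob_higgs_normal_le_rpow hδ (update_last_mem_halfSpace x hs)).trans_eq
    (congrArg (C * · ^ (1 + δ)) (Function.update_self (Fin.last 3) s x))

end IsKWSolution

theorem nahm_pole_uniqueness_general (hsol : IsKWSolution A φ)
    (hdecay : HasNahmPoleDecay A φ M C δ) (hδ : 0 < δ) :
    ∀ x : Fin 4 → ℝ, 0 < x 3 →
      (∀ i j : Fin 4, curv A i j x = 0)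
      ∧ φ x 3 = 0
      ∧ (∀ i : Fin 4, covD A φ i 3 x = 0)
      ∧ (∀ a : Fin 3, φ x 3 * φ x (sp a) - φ x (sp a) * φ x 3 = 0)
      ∧ (∀ a b : Fin 3, covD A φ (sp a) (sp b) x = 0)
      ∧ (∀ a : Fin 3,
          covD A φ 3 (sp a) x + (1 / 2 : ℂ) •
            ∑ b, ∑ c, eps3 a b c •
              (φ x (sp b) * φ x (sp c) - φ x (sp c) * φ x (sp b)) = 0) := by
  intro x hx
  have h := hsol.isFlatNahm hdecay hδ hx
  simp only [hsol.curv_eq hx, hsol.covD_eq hx]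
  refine ⟨h.curvature_eq_zero fun i j => congrFun (curvature_swap A i j) x,
    hsol.higgs_normal_eq_zero hdecay hδ hx, h.covDeriv_normal, fun a => ?_,
    h.covDeriv_tangential, fun a => ?_⟩
  · rw [← Ring.lie_def, ← lie_skew, h.lie_normal a, neg_zero]
  · simp only [← Ring.lie_def]
    rw [half_smul_sum_eps3_smul_lie fun b => φ x (sp b)]
    exact h.nahm a

end Uniqueness

/-- Uniqueness of the Nahm pole solution on the half-space: a smooth skew-Hermitian
solution of the KW equations on `{x₄ > 0}` which is asymptotic (at the stated rates) to
the Nahm pole solution `A = 0`, `φ = Σ t_a dxᵃ/y` as `y → 0` and at infinity is flat,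
has `φ₄ = 0` with `φ₄` covariantly constant, has `φ_a` covariantly constant in the
boundary directions, and solves Nahm's equations in `y`; i.e. it is the Nahm pole
solution up to gauge. -/
theorem nahm_pole_uniqueness {n : ℕ} (t : Fin 3 → Matrix (Fin n) (Fin n) ℂ)
    (h12 : t 0 * t 1 - t 1 * t 0 = t 2)
    (h23 : t 1 * t 2 - t 2 * t 1 = t 0)
    (h31 : t 2 * t 0 - t 0 * t 2 = t 1)
    (htskew : ∀ a, (t a)ᴴ = -t a)
    (A φ : (Fin 4 → ℝ) → Fin 4 → Matrix (Fin n) (Fin n) ℂ)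
    (hAsmooth : ∀ i, ContDiffOn ℝ (⊤ : ℕ∞) (fun x => A x i) {x | 0 < x 3})
    (hφsmooth : ∀ i, ContDiffOn ℝ (⊤ : ℕ∞) (fun x => φ x i) {x | 0 < x 3})
    (hAskew : ∀ x : Fin 4 → ℝ, 0 < x 3 → ∀ i, (A x i)ᴴ = -A x i)
    (hφskew : ∀ x : Fin 4 → ℝ, 0 < x 3 → ∀ i, (φ x i)ᴴ = -φ x i)
    (hKW1 : ∀ x : Fin 4 → ℝ, 0 < x 3 → ∀ i j : Fin 4,
      curv A i j x - (φ x i * φ x j - φ x j * φ x i)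
        + ∑ k, ∑ l, eps4 i j k l • covD A φ k l x = 0)
    (hKW2 : ∀ x : Fin 4 → ℝ, 0 < x 3 → ∑ i, covD A φ i i x = 0)
    (C : ℝ) (hC : 0 < C) (δ : ℝ) (hδ0 : 0 < δ) (hδ1 : δ < 1)
    (ha : ∀ x : Fin 4 → ℝ, 0 < x 3 → ∀ a : Fin 3,
      frob (φ x (sp a) - ((x 3 : ℂ))⁻¹ • t a)
        ≤ C * min ((x 3) ^ δ) ((nrm x) ^ (-(1 + δ))))
    (hb : ∀ x : Fin 4 → ℝ, 0 < x 3 →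
      frob (φ x 3) ≤ C * (x 3) ^ (1 + δ) * (1 + nrm x) ^ (-(3 + 2 * δ)))
    (hc : ∀ x : Fin 4 → ℝ, 0 < x 3 → ∀ a b : Fin 3,
      frob (curv A (sp a) (sp b) x)
        ≤ C * min ((x 3) ^ (1 + δ)) ((nrm x) ^ (-(2 + δ))))
    (hd : ∀ x : Fin 4 → ℝ, 0 < x 3 → ∀ a b : Fin 3,
      frob (covD A φ (sp a) (sp b) x)
        ≤ C * min ((x 3) ^ δ) ((nrm x) ^ (-(2 + δ))))
    (he1 : ∀ x : Fin 4 → ℝ, 0 < x 3 → ∀ a : Fin 3,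
      frob (covD A φ (sp a) 3 x)
        ≤ C * min ((x 3) ^ (1 + δ)) ((nrm x) ^ (-(2 + δ))))
    (he2 : ∀ x : Fin 4 → ℝ, 0 < x 3 →
      frob (covD A φ 3 3 x) ≤ C * min ((x 3) ^ δ) ((nrm x) ^ (-(2 + δ))))
    (hf : ∀ x : Fin 4 → ℝ, 0 < x 3 → ∀ a : Fin 3,
      frob (covD A φ 3 (sp a) x + (((x 3 : ℂ)) ^ 2)⁻¹ • t a)
        ≤ C * min 1 ((nrm x) ^ (-(2 + δ)))) :
    ∀ x : Fin 4 → ℝ, 0 < x 3 →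
      (∀ i j : Fin 4, curv A i j x = 0)
      ∧ φ x 3 = 0
      ∧ (∀ i : Fin 4, covD A φ i 3 x = 0)
      ∧ (∀ a : Fin 3, φ x 3 * φ x (sp a) - φ x (sp a) * φ x 3 = 0)
      ∧ (∀ a b : Fin 3, covD A φ (sp a) (sp b) x = 0)
      ∧ (∀ a : Fin 3,
          covD A φ 3 (sp a) x + (1 / 2 : ℂ) •
            ∑ b, ∑ c, eps3 a b c •
              (φ x (sp b) * φ x (sp c) - φ x (sp c) * φ x (sp b)) = 0) := by
  exact nahm_pole_uniqueness_general (M := C + ∑ a, frob (t a))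
    ⟨contDiffOn_pi.2 fun i => (hAsmooth i).of_le ENat.LEInfty.out,
      contDiffOn_pi.2 fun i => (hφsmooth i).of_le ENat.LEInfty.out, hAskew, hφskew, hKW1, hKW2⟩
    ⟨fun x hx a => frob_le_div_of_frob_sub_le t hC.le hδ0.le hx (ha x hx a), hb, hc, hd, he1, he2⟩
    hδ0
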